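/- If G is a 4-connected graph then either c ≥ 4δ − κ − 4, or every longest cycle in G is a dominating cycle. -/

import Mathlib

open SimpleGraph

variable {V : Type*}

/-- `G` is `k`-connected: more than `k` vertices and removing fewer than `k`
vertices leaves a connected graph. -/
def KConnected (G : SimpleGraph V) [Fintype V] (k : ℕ) : Prop :=
  k < Fintype.card V ∧
    ∀ S : Finset V, S.card < k → (G.induce ((↑S : Set V)ᶜ)).Connected

/-- vertex connectivity `κ`. -/
noncomputable def connectivity (G : SimpleGraph V) [Fintype V] : ℕ :=
  sSup {k | KConnected G k}

/-- independence number `α`. -/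
noncomputable def indepNumber (G : SimpleGraph V) [Fintype V] : ℕ :=
  sSup {k | ∃ s : Finset V, (∀ u ∈ s, ∀ v ∈ s, ¬ G.Adj u v) ∧ s.card = k}

/-- circumference `c`: length of a longest cycle. -/
noncomputable def circumference (G : SimpleGraph V) [Fintype V] : ℕ :=
  sSup {n | ∃ (v : V) (w : G.Walk v v), w.IsCycle ∧ w.length = n}

/-- `w` is a longest cycle of `G`. -/
def IsLongestCycle {G : SimpleGraph V} {v : V} (w : G.Walk v v) : Prop :=
  w.IsCycle ∧ ∀ (u : V) (w' : G.Walk u u), w'.IsCycle → w'.length ≤ w.length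

/-- dominating cycle: every edge has an endpoint on the cycle. -/
def IsDominatingCycle {G : SimpleGraph V} {v : V} (w : G.Walk v v) : Prop :=
  w.IsCycle ∧ ∀ x y, G.Adj x y → x ∈ w.support ∨ y ∈ w.support

/-- generalized cycle of length `n` with vertex set `W`: single vertices are
cycles of length 1, edges are cycles of length 2. -/
def ExtCycle (G : SimpleGraph V) (W : Set V) (n : ℕ) : Prop :=
  (n = 1 ∧ ∃ v : V, W = {v}) ∨
  (n = 2 ∧ ∃ u v : V, G.Adj u v ∧ W = {u, v}) ∨
  (3 ≤ n ∧ ∃ (v : V) (w : G.Walk v v), w.IsCycle ∧ w.length = n ∧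
      W = {x | x ∈ w.support})

/-- `p̄`: the length of a longest path in `G \ C`. -/
noncomputable def pathBar (G : SimpleGraph V) [Fintype V] {v : V} (w : G.Walk v v) : ℕ :=
  sSup {n | ∃ (a b : {x : V | x ∉ w.support})
      (p : (G.induce {x : V | x ∉ w.support}).Walk a b), p.IsPath ∧ p.length = n}

/-- `c̄`: the length of a longest (generalized) cycle in `G \ C`. -/
noncomputable def cycBar (G : SimpleGraph V) [Fintype V] {v : V} (w : G.Walk v v) : ℕ :=
  sSup {n | ∃ W, ExtCycle (G.induce {x : V | x ∉ w.support}) W n}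

/-- `CD_m`-cycle: every (generalized) cycle of length at least `m` meets `w`. -/
def IsCDCycle (G : SimpleGraph V) {v : V} (w : G.Walk v v) (m : ℕ) : Prop :=
  w.IsCycle ∧ ∀ (W : Set V) (n : ℕ), ExtCycle G W n → m ≤ n → ∃ x ∈ W, x ∈ w.support

/-!
Let `C` be a longest cycle that misses an edge `xy`, and call the components of `G - C` outer.

Suppose first that some outer component has at least three vertices. Long paths inside it exist
because its vertices have degree at least `δ`: either any two of its vertices are joined by such a
path, or a cut vertex splits off two lobes, each of which contains one. Since `C` is longest, two
consecutive contacts on `C` whose neighbours in the component differ are far apart. Connectivity 4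
produces enough such switches to give `|C| ≥ 4δ - 8`, and `κ ≥ 4`.

Otherwise the outer components have at most two vertices. Let `N` and `M` be the sets of vertices of
`C` adjacent to `x` or `y` and to both of them, so `2δ ≤ |N| + |M| + 2`. The successors of `N`
and the second successors of `M` are distinct and outside `N`; call them bad, and call the vertices
of `C` in neither set good, so that `|C| = 2|N| + |M| + #good`. Exchange arguments show that bad
vertices have few bad neighbours. If `|M| ≤ κ`, then `|C| ≥ 2(|N| + |M|) - |M| ≥ 4δ - 4 - κ`.
If `|M| > κ`, take a minimum separator `S`. If `S` meets every edge outside `C`, then two vertices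
separated by `S` have together at most `|N| + #good + |S| + 2` neighbours. Otherwise take for `xy`
an edge off `S`; some vertex then has at most `#good + |S| + 1` neighbours.
-/

section

open Function
open scoped Classical

variable {G : SimpleGraph V}

/-! ### Reachability and paths inside a vertex set -/

/-- The neighbours of `v` inside the finite vertex set `U`; their number is the degree of `v`
into `U`. -/
noncomputable def nbrsIn (G : SimpleGraph V) (U : Finset V) (v : V) : Finset V :=
  {w ∈ U | G.Adj v w}

@[simp]
theorem mem_nbrsIn {U : Finset V} {v w : V} : w ∈ nbrsIn G U v ↔ w ∈ U ∧ G.Adj v w := by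
  simp [nbrsIn]

theorem card_nbrsIn_le_card_nbrsIn_erase_add_one (U : Finset V) (u v : V) :
    (nbrsIn G U v).card ≤ (nbrsIn G (U.erase u) v).card + 1 := by
  have hsub : (nbrsIn G U v).erase u ⊆ nbrsIn G (U.erase u) v := fun z hz => by simp_all
  have := Finset.card_le_card hsub
  have := Finset.pred_card_le_card_erase (s := nbrsIn G U v) (a := u)
  omega

/-- Reachability of `b` from `a` by a walk all of whose vertices lie in `U`, endpoints included;
the analogue of reachability in `G.induce U` that avoids subtypes. -/
def ReachableWithin (G : SimpleGraph V) (U : Set V) (a b : V) : Prop :=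
  ∃ p : G.Walk a b, ∀ z ∈ p.support, z ∈ U

namespace ReachableWithin

variable {U W : Set V} {a b c : V}

theorem refl (ha : a ∈ U) : ReachableWithin G U a a :=
  ⟨.nil, by simpa⟩

theorem right_mem (h : ReachableWithin G U a b) : b ∈ U :=
  h.elim fun p hp => hp b p.end_mem_support

theorem mono (h : ReachableWithin G U a b) (hUW : U ⊆ W) : ReachableWithin G W a b :=
  h.imp fun _ hp z hz => hUW (hp z hz)

theorem symm (h : ReachableWithin G U a b) : ReachableWithin G U b a :=
  h.elim fun p hp => ⟨p.reverse, by simpa using hp⟩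

theorem trans (hab : ReachableWithin G U a b) (hbc : ReachableWithin G U b c) :
    ReachableWithin G U a c := by
  obtain ⟨p, hp⟩ := hab
  obtain ⟨q, hq⟩ := hbc
  exact ⟨p.append q, fun z hz => (Walk.mem_support_append_iff p q).1 hz |>.elim (hp z) (hq z)⟩

theorem of_adj (hab : G.Adj a b) (ha : a ∈ U) (hb : b ∈ U) : ReachableWithin G U a b :=
  ⟨hab.toWalk, by simp [ha, hb]⟩

theorem step (h : ReachableWithin G U a b) (hbc : G.Adj b c) (hc : c ∈ U) :
    ReachableWithin G U a c :=
  h.trans (of_adj hbc h.right_mem hc)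

theorem exists_exit {K : Set V} (h : ReachableWithin G U a b) (ha : a ∈ K) (hb : b ∉ K) :
    ∃ k ∈ K, ∃ e ∈ U \ K, G.Adj k e ∧ ReachableWithin G (U ∩ K) a k := by
  obtain ⟨p, hp⟩ := h
  induction p with
  | nil => exact absurd ha hb
  | @cons a d b had p ih =>
    simp only [Walk.support_cons, List.mem_cons, forall_eq_or_imp] at hp
    have hd : d ∈ U := hp.2 d p.start_mem_support
    by_cases hdK : d ∈ K
    · obtain ⟨k, hk, e, he, hke, hdk⟩ := ih hdK hb hp.2
      exact ⟨k, hk, e, he, hke, trans (of_adj had ⟨hp.1, ha⟩ ⟨hd, hdK⟩) hdk⟩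
    · exact ⟨a, ha, d, ⟨hd, hdK⟩, had, refl ⟨hp.1, ha⟩⟩

end ReachableWithin

/-- There is a path from `a` to `b` of length at least `k` all of whose vertices lie in `U`. -/
def HasPathWithin (G : SimpleGraph V) (U : Set V) (a b : V) (k : ℕ) : Prop :=
  ∃ p : G.Walk a b, p.IsPath ∧ (∀ z ∈ p.support, z ∈ U) ∧ k ≤ p.length

theorem ReachableWithin.hasPathWithin {U : Set V} {a b : V} (h : ReachableWithin G U a b) :
    HasPathWithin G U a b 0 :=
  h.elim fun p hp => ⟨p.bypass, p.bypass_isPath,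
    fun z hz => hp z (p.support_bypass_subset_support hz), Nat.zero_le _⟩

namespace HasPathWithin

variable {U U' : Set V} {a b c : V} {k l : ℕ}

theorem refl (ha : a ∈ U) : HasPathWithin G U a a 0 :=
  ⟨.nil, .nil, by simpa, le_rfl⟩

theorem of_adj (hab : G.Adj a b) (ha : a ∈ U) (hb : b ∈ U) : HasPathWithin G U a b 1 :=
  ⟨hab.toWalk, by simp [hab.ne], by simp [ha, hb], by simp⟩

theorem mono (h : HasPathWithin G U a b k) (hU : U ⊆ U') (hl : l ≤ k) :
    HasPathWithin G U' a b l :=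
  h.imp fun _ hp => ⟨hp.1, fun z hz => hU (hp.2.1 z hz), hl.trans hp.2.2⟩

theorem symm (h : HasPathWithin G U a b k) : HasPathWithin G U b a k :=
  h.elim fun p hp => ⟨p.reverse, hp.1.reverse, by simpa using hp.2.1, by simpa using hp.2.2⟩

theorem trans (h : HasPathWithin G U a b k) (h' : HasPathWithin G U' b c l)
    (hU : ∀ z ∈ U, z ∈ U' → z = b) : HasPathWithin G (U ∪ U') a c (k + l) := by
  obtain ⟨p, hp, hpU, hk⟩ := h
  obtain ⟨q, hq, hqU, hl⟩ := h'
  have hbq : b ∉ q.support.tail := by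
    have := hq.support_nodup
    rw [← q.cons_tail_support] at this
    exact (List.nodup_cons.1 this).1
  refine ⟨p.append q, ?_, ?_, by simpa using add_le_add hk hl⟩
  · rw [Walk.isPath_def, Walk.support_append, List.nodup_append']
    refine ⟨hp.support_nodup, hq.support_nodup.tail, fun z hzp hzq => ?_⟩
    obtain rfl := hU z (hpU z hzp) (hqU z (List.mem_of_mem_tail hzq))
    exact hbq hzq
  · intro z hz
    exact (Walk.mem_support_append_iff p q).1 hz |>.imp (hpU z) (hqU z)

theorem cons (hab : G.Adj a b) (h : HasPathWithin G U b c k) (ha : a ∉ U) :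
    HasPathWithin G (insert a U) a c (k + 1) := by
  obtain ⟨p, hp, hpU, hk⟩ := h
  refine ⟨p.cons hab, hp.cons fun haU => ha (hpU a haU), ?_, by simpa using hk⟩
  intro z hz
  rw [Walk.support_cons, List.mem_cons] at hz
  exact hz.imp id (hpU z)

theorem exists_isCycle (h : HasPathWithin G U a b k) (h' : HasPathWithin G U' b a l)
    (hU : ∀ z ∈ U, z ∈ U' → z = a ∨ z = b) (hab : a ≠ b) (hkl : 3 ≤ k + l) :
    ∃ (v : V) (w : G.Walk v v), w.IsCycle ∧ k + l ≤ w.length := by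
  obtain ⟨p, hp, hpU, hk⟩ := h
  obtain ⟨q, hq, hqU, hl⟩ := h'
  refine ⟨a, p.append q, hp.isCycle_append hq ?_ (by omega), by simpa using add_le_add hk hl⟩
  have hap := hp.support_nodup
  have hbq := hq.support_nodup
  rw [← Walk.cons_tail_support, List.nodup_cons] at hap hbq
  intro z hzp hzq
  rcases hU z (hpU z (List.mem_of_mem_tail hzp)) (hqU z (List.mem_of_mem_tail hzq)) with rfl | rfl
  · exact hap.1 hzp
  · exact hbq.1 hzq

theorem ear {u v : V} (h : HasPathWithin G U a b k) (hua : G.Adj u a) (hbv : G.Adj b v)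
    (huv : u ≠ v) (hu : u ∉ U) (hv : v ∉ U) :
    HasPathWithin G (insert u (insert v U)) u v (k + 2) := by
  have hvu := (h.symm.cons hbv.symm hv).symm
  exact hvu.cons hua (by simp [huv, hu])

end HasPathWithin

/-! ### Connectivity and separations -/

namespace KConnected

variable [Fintype V] {k l : ℕ} {S A : Finset V} {a b : V}

theorem mono (h : KConnected G l) (hkl : k ≤ l) : KConnected G k :=
  ⟨hkl.trans_lt h.1, fun S hS => h.2 S (hS.trans_le hkl)⟩

theorem reachableWithin (h : KConnected G k) (hS : S.card < k) (ha : a ∉ S) (hb : b ∉ S) :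
    ReachableWithin G (S : Set V)ᶜ a b := by
  obtain ⟨p⟩ := (h.2 S hS).preconnected ⟨a, ha⟩ ⟨b, hb⟩
  refine ⟨p.map (Embedding.induce _).toHom, fun z hz => ?_⟩
  obtain ⟨z', -, rfl⟩ := List.mem_map.1 ((Walk.support_map _ _) ▸ hz)
  exact z'.2

theorem exists_adj (h : KConnected G k) (hS : S.card < k) (ha : a ∈ A) (haS : a ∉ S) (hb : b ∉ A)
    (hbS : b ∉ S) : ∃ p ∈ A, ∃ q ∉ A, p ∉ S ∧ q ∉ S ∧ G.Adj p q := by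
  obtain ⟨p, hp, q, hq, hpq, hap⟩ := (h.reachableWithin hS haS hbS).exists_exit (K := A) ha hb
  exact ⟨p, hp, q, hq.2, hap.right_mem.1, hq.1, hpq⟩

theorem le_connectivity (h : KConnected G k) :
    k ≤ connectivity G :=
  le_csSup ⟨Fintype.card V, fun _ hk => hk.1.le⟩ h

end KConnected

/-- The set `S` separates the nonempty sets `P` and `Q`: the three sets partition the vertices and
no edge joins `P` to `Q`. -/
structure IsSeparation (G : SimpleGraph V) (P Q S : Finset V) : Prop where
  disjoint : Disjoint P Q
  disjoint_left : Disjoint P S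
  disjoint_right : Disjoint Q S
  mem_or_mem_or_mem : ∀ v, v ∈ P ∨ v ∈ Q ∨ v ∈ S
  not_adj : ∀ p ∈ P, ∀ q ∈ Q, ¬ G.Adj p q
  nonempty_left : P.Nonempty
  nonempty_right : Q.Nonempty

namespace IsSeparation

variable {P Q S U : Finset V} {p q v : V}

theorem symm (h : IsSeparation G P Q S) : IsSeparation G Q P S where
  disjoint := h.disjoint.symm
  disjoint_left := h.disjoint_right
  disjoint_right := h.disjoint_left
  mem_or_mem_or_mem v := or_left_comm.1 (h.mem_or_mem_or_mem v)
  not_adj q hq p hp hqp := h.not_adj p hp q hq hqp.symm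
  nonempty_left := h.nonempty_right
  nonempty_right := h.nonempty_left

theorem mem_or_mem_of_adj (h : IsSeparation G P Q S) (hp : p ∈ P) (hpv : G.Adj p v) :
    v ∈ P ∨ v ∈ S :=
  (h.mem_or_mem_or_mem v).imp_right fun hv => hv.resolve_left fun hvQ => h.not_adj p hp v hvQ hpv

theorem card_inter_add_card_inter_add_card_inter (h : IsSeparation G P Q S) (U : Finset V) :
    (U ∩ P).card + (U ∩ Q).card + (U ∩ S).card = U.card := by
  have hPQ := Finset.disjoint_left.1 h.disjoint
  have hPS := Finset.disjoint_left.1 h.disjoint_left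
  have hQS := Finset.disjoint_left.1 h.disjoint_right
  have hunion : U = U ∩ P ∪ U ∩ Q ∪ U ∩ S := by
    ext v
    have := h.mem_or_mem_or_mem v
    grind
  conv_rhs => rw [hunion]
  rw [Finset.card_union_of_disjoint, Finset.card_union_of_disjoint] <;>
    · rw [Finset.disjoint_left]
      grind

theorem card_nbrsIn_add_card_inter_le (h : IsSeparation G P Q S) (hq : q ∈ Q) :
    (nbrsIn G U q).card + (U ∩ P).card ≤ U.card := by
  rw [← Finset.card_union_of_disjoint]
  · exact Finset.card_le_card (by grind [mem_nbrsIn])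
  · rw [Finset.disjoint_left]
    intro v hv hv'
    exact h.not_adj v (Finset.mem_inter.1 hv').2 q hq (mem_nbrsIn.1 hv).2.symm

theorem card_nbrsIn_add_card_nbrsIn_le (h : IsSeparation G P Q S) (hp : p ∈ P) (hq : q ∈ Q) :
    (nbrsIn G U p).card + (nbrsIn G U q).card ≤ U.card + (U ∩ S).card := by
  rw [← Finset.card_union_add_card_inter]
  refine Nat.add_le_add (Finset.card_le_card (by grind [mem_nbrsIn]))
    (Finset.card_le_card fun v hv => ?_)
  simp only [Finset.mem_inter, mem_nbrsIn] at hv ⊢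
  exact ⟨hv.1.1, (h.mem_or_mem_of_adj hp hv.1.2).resolve_left
    fun hvP => h.not_adj v hvP q hq hv.2.2.symm⟩

end IsSeparation

theorem exists_isSeparation [Fintype V] {S : Finset V} (hS : S.card < Fintype.card V)
    (h : ¬ (G.induce (S : Set V)ᶜ).Connected) : ∃ P Q, IsSeparation G P Q S := by
  obtain ⟨v, hv⟩ : ∃ v, v ∉ S := by
    by_contra! hall
    exact hS.ne (Finset.card_eq_iff_eq_univ S |>.2 (Finset.eq_univ_iff_forall.2 hall))
  have hne : Nonempty ((S : Set V)ᶜ : Set V) := ⟨⟨v, hv⟩⟩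
  obtain ⟨a, b, hab⟩ : ∃ a b, ¬ (G.induce (S : Set V)ᶜ).Reachable a b := by
    by_contra! hall
    exact h ⟨hall⟩
  let P : Finset V := {v | ∃ hv : v ∈ (S : Set V)ᶜ, (G.induce (S : Set V)ᶜ).Reachable a ⟨v, hv⟩}
  have mem_P {v : V} :
      v ∈ P ↔ ∃ hv : v ∈ (S : Set V)ᶜ, (G.induce (S : Set V)ᶜ).Reachable a ⟨v, hv⟩ := by
    simp [P]
  have hPS {v : V} (hv : v ∈ P) : v ∉ S := (mem_P.1 hv).1
  refine ⟨P, (P ∪ S)ᶜ, ?_, ?_, ?_, fun v => ?_, fun p hp q hq hpq => ?_, ?_, ?_⟩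
  · exact Finset.disjoint_left.2 fun v hv => by simp [hv]
  · exact Finset.disjoint_left.2 fun v => hPS
  · exact Finset.disjoint_left.2 fun v hv => by simp_all
  · simp only [Finset.mem_compl, Finset.mem_union]
    tauto
  · simp only [Finset.mem_compl, Finset.mem_union, not_or] at hq
    obtain ⟨hpS, hap⟩ := mem_P.1 hp
    exact hq.1 (mem_P.2 ⟨hq.2, hap.trans (Adj.reachable hpq)⟩)
  · exact ⟨a, mem_P.2 ⟨a.2, .refl _⟩⟩
  · refine ⟨b, ?_⟩
    simp only [Finset.mem_compl, Finset.mem_union, not_or]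
    exact ⟨fun hb => hab (mem_P.1 hb).2, b.2⟩

theorem exists_isSeparation_card_le_connectivity [Fintype V]
    (hV : connectivity G + 1 < Fintype.card V) :
    ∃ P Q S, IsSeparation G P Q S ∧ S.card ≤ connectivity G := by
  obtain ⟨S, hS, hconn⟩ : ∃ S : Finset V, S.card < connectivity G + 1 ∧
      ¬ (G.induce (S : Set V)ᶜ).Connected := by
    by_contra! hall
    exact (KConnected.le_connectivity ⟨hV, hall⟩).not_gt (Nat.lt_succ_self _)
  obtain ⟨P, Q, hs⟩ := exists_isSeparation (by omega) hconn
  exact ⟨P, Q, S, hs, Nat.lt_succ_iff.1 hS⟩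

/-! ### Long paths in almost-blocks -/

theorem ReachableWithin.exists_adj {U : Set V} {a b : V} (h : ReachableWithin G U a b)
    (hab : a ≠ b) : ∃ e ∈ U, G.Adj a e := by
  obtain ⟨k, rfl, e, he, hke, -⟩ := h.exists_exit (K := {a}) rfl hab.symm
  exact ⟨e, he.1, hke⟩

theorem ReachableWithin.hasPathWithin_diff {A K : Set V} {y x : V} (h : ReachableWithin G A y x)
    (hy : y ∉ K) (hK : ∀ k ∈ K, ¬ ReachableWithin G (A \ {y}) k x) :
    HasPathWithin G (A \ K) y x 0 := by
  obtain ⟨p, hp, hpA, -⟩ := h.hasPathWithin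
  refine ⟨p, hp, fun z hz => ⟨hpA z hz, fun hzK => ?_⟩, Nat.zero_le _⟩
  have hzy : z ≠ y := fun h => hy (h ▸ hzK)
  refine hK z hzK ⟨p.dropUntil z hz, fun u hu =>
    ⟨hpA u (p.support_dropUntil_subset_support hz hu), ?_⟩⟩
  rintro rfl
  have happ : ((p.takeUntil z hz).append (p.dropUntil z hz)).IsPath := by rwa [p.take_spec hz]
  exact happ.ne_of_mem_support_of_append hzy.symm (Walk.start_mem_support _) hu rfl

/-- The vertices of `U` that can be reached from `v` inside `U`. -/
noncomputable def componentWithin (G : SimpleGraph V) (U : Finset V) (v : V) : Finset V :=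
  {z ∈ U | ReachableWithin G U v z}

@[simp]
theorem mem_componentWithin {U : Finset V} {v z : V} :
    z ∈ componentWithin G U v ↔ ReachableWithin G U v z := by
  simpa [componentWithin] using fun h => h.right_mem

theorem componentWithin_subset (U : Finset V) (v : V) : componentWithin G U v ⊆ U :=
  Finset.filter_subset _ _

theorem reachableWithin_componentWithin {U : Finset V} {v z : V}
    (hz : z ∈ componentWithin G U v) : ReachableWithin G (componentWithin G U v) v z := by
  obtain ⟨p, hp⟩ := mem_componentWithin.1 hz
  exact ⟨p, fun u hu => mem_componentWithin.2
    ⟨p.takeUntil u hu, fun u' hu' => hp u' (p.support_takeUntil_subset_support hu hu')⟩⟩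

/-- `U` is two-connected once the edge `s t` is added: after the removal of any vertex `y`, every
other vertex of `U` still reaches one of the two terminals. -/
structure IsAlmostBlock (G : SimpleGraph V) (U : Finset V) (s t : V) : Prop where
  left_mem : s ∈ U
  right_mem : t ∈ U
  ne : s ≠ t
  reach : ∀ y ∈ U, ∀ v ∈ U, v ≠ y →
    ReachableWithin G (U.erase y) v s ∨ ReachableWithin G (U.erase y) v t

namespace IsAlmostBlock

variable {U : Finset V} {s t s' v w x : V} {D : ℕ}

theorem reach_right (h : IsAlmostBlock G U s t) (hv : v ∈ U) (hvs : v ≠ s) :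
    ReachableWithin G (U.erase s) v t :=
  (h.reach s h.left_mem v hv hvs).resolve_left fun h' => by simpa using h'.right_mem

theorem exists_adj (h : IsAlmostBlock G U s t) (hx : x ∈ U) (hv : v ∈ U) (hvx : v ≠ x)
    (hvs : v ≠ s) (hvt : v ≠ t) : ∃ e ∈ U, e ≠ x ∧ G.Adj v e := by
  obtain ⟨e, he, hve⟩ := (h.reach x hx v hv hvx).elim (·.exists_adj hvs) (·.exists_adj hvt)
  simp only [Finset.coe_erase, Set.mem_sdiff, Finset.mem_coe, Set.mem_singleton_iff] at he
  exact ⟨e, he.1, he.2, hve⟩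

theorem exists_first_edge (h : IsAlmostBlock G U s t) (hne : ∃ z ∈ U, z ≠ s ∧ z ≠ t) (w : V) :
    ∃ s' ∈ U, s' ≠ t ∧ G.Adj s s' ∧ (w ∈ U → w ≠ t → G.Adj s w → s' = w) := by
  by_cases hw : w ∈ U ∧ w ≠ t ∧ G.Adj s w
  · exact ⟨w, hw.1, hw.2.1, hw.2.2, fun _ _ _ => rfl⟩
  obtain ⟨z, hz, hzs, hzt⟩ := hne
  have hreach : ReachableWithin G (U.erase t) z s :=
    (h.reach t h.right_mem z hz hzt).resolve_right fun h' => by simpa using h'.right_mem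
  obtain ⟨e, he, hse⟩ := hreach.symm.exists_adj hzs.symm
  rw [Finset.mem_coe, Finset.mem_erase] at he
  exact ⟨e, he.2, he.1, hse, fun a b c => absurd ⟨a, b, c⟩ hw⟩

theorem hasPathWithin_of_subset (h : IsAlmostBlock G U s t) (hs' : s' ∈ U) (hs't : s' ≠ t)
    (hs'w : s' ≠ w) (hss' : G.Adj s s') (hU : U ⊆ {s, s', t, w})
    (hsw : w ∈ U → w ≠ t → ¬ G.Adj s w) (hdeg : D ≤ (nbrsIn G U s').card) :
    HasPathWithin G U s t (max D 2) := by
  have hsU := h.left_mem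
  have htU := h.right_mem
  have hs's := hss'.ne'
  have hst := h.ne
  by_cases hw : w ∈ U ∧ w ≠ t ∧ w ≠ s ∧ G.Adj s' w
  · obtain ⟨hwU, hwt, hws, hs'w'⟩ := hw
    have hwadj : G.Adj w t := by
      obtain ⟨e, he, hes', hwe⟩ := h.exists_adj hs' hwU hs'w.symm hws hwt
      have := hU he
      have := hsw hwU hwt
      grind [G.loopless.irrefl w, G.adj_comm]
    have hcard : (nbrsIn G U s').card ≤ 3 := by
      refine (Finset.card_le_card (t := {s, t, w}) fun z hz => ?_).trans Finset.card_le_three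
      have := hU (mem_nbrsIn.1 hz).1
      grind [(mem_nbrsIn.1 hz).2.ne]
    have hpath := ((HasPathWithin.of_adj (U := {w, t}) hwadj (by simp) (by simp)).cons hs'w'
      (by simp [hs't, hs'w])).cons hss' (by simp [hst, hws.symm, hs's.symm])
    exact hpath.mono (by grind [Set.insert_subset_iff]) (by omega)
  · have hN : nbrsIn G U s' ⊆ {s, t} := fun z hz => by
      have hz' := mem_nbrsIn.1 hz
      have := hU hz'.1
      grind [hz'.2.ne]
    have hs't' : G.Adj s' t := by
      obtain ⟨e, he, hes, hs'e⟩ := h.exists_adj hsU hs' hs's hs's hs't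
      have := hN (mem_nbrsIn.2 ⟨he, hs'e⟩)
      grind
    have hcard := (Finset.card_le_card hN).trans Finset.card_le_two
    have hpath := (HasPathWithin.of_adj (U := {s', t}) hs't' (by simp) (by simp)).cons hss'
      (by simp [hst, hs's.symm])
    exact hpath.mono (by grind [Set.insert_subset_iff]) (by omega)

theorem exists_componentWithin_of_not_erase (h : IsAlmostBlock G U s t) (hs' : s' ∈ U)
    (hs's : s' ≠ s) (hs't : s' ≠ t) (hnot : ¬ IsAlmostBlock G (U.erase s) s' t) :
    ∃ x ∈ U, x ≠ s ∧ ∃ v ∈ (U.erase s).erase x,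
      s' ∉ componentWithin G ((U.erase s).erase x) v ∧
      t ∉ componentWithin G ((U.erase s).erase x) v := by
  by_contra! hcon
  refine hnot ⟨by simp [hs', hs's], by simp [h.right_mem, h.ne.symm], hs't, fun y hy v hv hvy => ?_⟩
  rw [Finset.mem_erase] at hy
  have := hcon y hy.2 hy.1 v (Finset.mem_erase.2 ⟨hvy, hv⟩)
  rwa [mem_componentWithin, mem_componentWithin, ← or_iff_not_imp_left] at this

theorem mem_of_adj_componentWithin {k e : V}
    (hk : k ∈ componentWithin G ((U.erase s).erase x) v) (he : e ∈ U) (hke : G.Adj k e) :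
    e ∈ insert s (insert x (componentWithin G ((U.erase s).erase x) v)) := by
  rw [Finset.mem_insert, Finset.mem_insert, mem_componentWithin]
  by_cases hes : e = s
  · exact .inl hes
  by_cases hex : e = x
  · exact .inr (.inl hex)
  exact .inr (.inr ((mem_componentWithin.1 hk).step hke (by simp [hes, hex, he])))

theorem insert_componentWithin (h : IsAlmostBlock G U s t) (hx : x ∈ U) (hxs : x ≠ s)
    (ht : t ∉ componentWithin G ((U.erase s).erase x) v) :
    IsAlmostBlock G (insert s (insert x (componentWithin G ((U.erase s).erase x) v))) s x := by
  set K := componentWithin G ((U.erase s).erase x) v with hK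
  have hKU : K ⊆ (U.erase s).erase x := componentWithin_subset _ _
  have hsK : s ∉ K := fun hs => by simpa using hKU hs
  have hWU : insert s (insert x K) ⊆ U := by grind [h.left_mem]
  refine ⟨by simp, by simp, hxs.symm, fun y hy z hz hzy => ?_⟩
  obtain rfl | rfl | hzK : z = s ∨ z = x ∨ z ∈ K := by simpa using hz
  · exact .inl (.refl (by simp [hzy]))
  · exact .inr (.refl (by simp [hzy]))
  obtain ⟨k, hk, e, he, hke, hzk⟩ : ∃ k ∈ (K : Set V), ∃ e ∈ (U.erase y : Set V) \ K,
      G.Adj k e ∧ ReachableWithin G (U.erase y ∩ K) z k :=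
    (h.reach y (hWU hy) z (by grind) hzy).elim (·.exists_exit hzK hsK) (·.exists_exit hzK ht)
  have hzk' : ReachableWithin G ((insert s (insert x K)).erase y) z k :=
    hzk.mono fun u hu => by
      have huy : u ≠ y := (Finset.mem_erase.1 hu.1).1
      have huK : u ∈ K := hu.2
      simp [huK, huy]
  have heU : e ∈ U ∧ e ≠ y := by simpa using he.1
  have heW := mem_of_adj_componentWithin hk heU.1 hke
  have heK : e ∉ K := he.2
  rw [← hK] at heW
  have hstep := hzk'.step hke (show e ∈ ((insert s (insert x K)).erase y : Finset V) by
    simp only [Finset.mem_erase]; exact ⟨heU.2, heW⟩)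
  obtain rfl | rfl : e = s ∨ e = x := by grind
  · exact .inl hstep
  · exact .inr hstep

theorem insert_componentWithin_ssubset (h : IsAlmostBlock G U s t) (hx : x ∈ U) (hs' : s' ∈ U)
    (hs's : s' ≠ s) (hs't : s' ≠ t) (hs'K : s' ∉ componentWithin G ((U.erase s).erase x) v)
    (htK : t ∉ componentWithin G ((U.erase s).erase x) v) :
    insert s (insert x (componentWithin G ((U.erase s).erase x) v)) ⊂ U := by
  have hKU := componentWithin_subset (G := G) ((U.erase s).erase x) v
  refine (Finset.ssubset_iff_of_subset (by grind [h.left_mem])).2 ?_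
  by_cases hxt : x = t
  · exact ⟨s', hs', by grind⟩
  · exact ⟨t, h.right_mem, by grind [h.ne]⟩

theorem hasPathWithin_of_componentWithin (h : IsAlmostBlock G U s t) (hx : x ∈ U) (hxs : x ≠ s)
    (htK : t ∉ componentWithin G ((U.erase s).erase x) v)
    (hpath : HasPathWithin G
      (insert s (insert x (componentWithin G ((U.erase s).erase x) v)) : Finset V) s x D) :
    HasPathWithin G U s t D := by
  set K := componentWithin G ((U.erase s).erase x) v
  have hKU : K ⊆ (U.erase s).erase x := componentWithin_subset _ _
  have htail : HasPathWithin G ((U.erase s : Finset V) \ (K : Set V)) x t 0 := by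
    refine (h.reach_right hx hxs).hasPathWithin_diff (fun hxK => by simpa using hKU hxK) ?_
    intro k hk hkt
    refine htK (mem_componentWithin.2 ((mem_componentWithin.1 hk).trans (hkt.mono ?_)))
    simp
  refine (hpath.trans htail fun z hz hz' => ?_).mono ?_ le_rfl
  · grind
  · have := h.left_mem
    intro z hz
    grind

theorem exists_ne_mem_componentWithin (h : IsAlmostBlock G U s t) (hx : x ∈ U)
    (hv : v ∈ (U.erase s).erase x) (hs'K : s' ∉ componentWithin G ((U.erase s).erase x) v)
    (htK : t ∉ componentWithin G ((U.erase s).erase x) v)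
    (hs'w : w ∈ U → w ≠ t → G.Adj s w → s' = w) :
    ∃ z ∈ componentWithin G ((U.erase s).erase x) v, z ≠ w := by
  have hvK : v ∈ componentWithin G ((U.erase s).erase x) v := by
    simpa only [mem_componentWithin] using ReachableWithin.refl (Finset.mem_coe.2 hv)
  obtain rfl | hvw := eq_or_ne v w
  · simp only [Finset.mem_erase] at hv
    have hvt : v ≠ t := fun hvt => htK (hvt ▸ hvK)
    obtain ⟨e, he, hex, hve⟩ := h.exists_adj hx hv.2.2 hv.1 hv.2.1 hvt
    refine ⟨e, ?_, hve.ne'⟩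
    have hes : e ≠ s := by
      rintro rfl
      exact hs'K (hs'w hv.2.2 hvt hve.symm ▸ hvK)
    simpa [hes, hex] using mem_of_adj_componentWithin hvK he hve
  · exact ⟨v, hvK, hvw⟩

/-- The first edge `s s'` goes to `w` whenever possible. If `U` minus `s` is again an almost block
with terminals `s'` and `t`, prepend `s` to a path there; otherwise a cut vertex `x` splits off a
smaller almost block with terminals `s` and `x`, whose inner vertices keep all their neighbours. -/
theorem hasPathWithin (h : IsAlmostBlock G U s t)
    (hdeg : ∀ v ∈ U, v ≠ s → v ≠ t → v ≠ w → D ≤ (nbrsIn G U v).card)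
    (hex : ∃ z ∈ U, z ≠ s ∧ z ≠ t ∧ z ≠ w) : HasPathWithin G U s t (max D 2) := by
  induction U using Finset.strongInduction generalizing s t D with
  | H U ih =>
  obtain ⟨s', hs', hs't, hss', hs'w⟩ :=
    h.exists_first_edge (hex.imp fun z hz => ⟨hz.1, hz.2.1, hz.2.2.1⟩) w
  by_cases hblock : IsAlmostBlock G (U.erase s) s' t
  · by_cases hex' : ∃ z ∈ U.erase s, z ≠ s' ∧ z ≠ t ∧ z ≠ w
    · have hdeg' : ∀ v ∈ U.erase s, v ≠ s' → v ≠ t → v ≠ w →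
          D - 1 ≤ (nbrsIn G (U.erase s) v).card := by
        intro v hv _ hvt hvw
        rw [Finset.mem_erase] at hv
        have := card_nbrsIn_le_card_nbrsIn_erase_add_one (G := G) U s v
        have := hdeg v hv.2 hv.1 hvt hvw
        omega
      have hpath := ih _ (Finset.erase_ssubset h.left_mem) hblock hdeg' hex'
      refine (hpath.cons hss' (by simp)).mono ?_ (by omega)
      simp [h.left_mem]
    · obtain ⟨z, hz, hzs, hzt, hzw⟩ := hex
      have hcover : ∀ u ∈ U, u = s ∨ u = s' ∨ u = t ∨ u = w := by
        simp only [Finset.mem_erase] at hex'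
        grind
      obtain rfl : z = s' := by grind
      refine h.hasPathWithin_of_subset hz hzt hzw hss' (fun u hu => by simpa using hcover u hu) ?_
        (hdeg z hz hzs hzt hzw)
      exact fun hwU hwt hsw => hzw (hs'w hwU hwt hsw)
  · obtain ⟨x, hx, hxs, v, hv, hs'K, htK⟩ :=
      h.exists_componentWithin_of_not_erase hs' hss'.ne' hs't hblock
    have hlobe := h.insert_componentWithin hx hxs htK
    have hsub := h.insert_componentWithin_ssubset hx hs' hss'.ne' hs't hs'K htK
    refine h.hasPathWithin_of_componentWithin hx hxs htK (ih _ hsub hlobe ?_ ?_)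
    · intro z hz hzs hzx hzw
      have hzK : z ∈ componentWithin G ((U.erase s).erase x) v := by simpa [hzs, hzx] using hz
      refine (hdeg z (hsub.1 hz) hzs (fun hzt => htK (hzt ▸ hzK)) hzw).trans
        (Finset.card_le_card ?_)
      intro u hu
      rw [mem_nbrsIn] at hu ⊢
      exact ⟨mem_of_adj_componentWithin hzK hu.1 hu.2, hu.2⟩
    · obtain ⟨z, hzK, hzw⟩ := h.exists_ne_mem_componentWithin hx hv hs'K htK hs'w
      have := componentWithin_subset _ _ hzK
      exact ⟨z, by simp_all, by grind, by grind, hzw⟩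

end IsAlmostBlock

/-! ### Longest cycles -/

/-- A longest cycle of `G`, traversed periodically: the vertices `vert 0, …, vert (len - 1)` are
distinct and `vert (i + len) = vert i`. -/
structure LongestCycle (G : SimpleGraph V) where
  vert : ℕ → V
  len : ℕ
  periodic : Periodic vert len
  injOn : Set.InjOn vert (Set.Iio len)
  adj : ∀ i, G.Adj (vert i) (vert (i + 1))
  three_le_len : 3 ≤ len
  length_le : ∀ {v : V} (w : G.Walk v v), w.IsCycle → w.length ≤ len

namespace LongestCycle

variable (C : LongestCycle G) {U U' : Set V} {i j k : ℕ} {v z : V}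

theorem vert_eq_vert_iff : C.vert i = C.vert j ↔ i ≡ j [MOD C.len] := by
  have hlen := C.three_le_len
  rw [← C.periodic.map_mod_nat i, ← C.periodic.map_mod_nat j]
  exact C.injOn.eq_iff (Nat.mod_lt _ (by omega)) (Nat.mod_lt _ (by omega))

theorem eq_of_vert_add_eq (hj : j < C.len) (hk : k < C.len)
    (h : C.vert (i + j) = C.vert (i + k)) : j = k :=
  (Nat.ModEq.add_left_cancel' i (C.vert_eq_vert_iff.1 h)).eq_of_lt_of_lt hj hk

/-- The vertex set of the cycle. -/
noncomputable def verts : Finset V := (Finset.range C.len).image C.vert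

@[simp]
theorem card_verts : C.verts.card = C.len := by
  rw [verts, Finset.card_image_of_injOn (by simpa using C.injOn), Finset.card_range]

theorem mem_verts : v ∈ C.verts ↔ ∃ i, C.vert i = v := by
  simp only [verts, Finset.mem_image, Finset.mem_range]
  refine ⟨fun ⟨i, _, hi⟩ => ⟨i, hi⟩, fun ⟨i, hi⟩ => ⟨i % C.len, Nat.mod_lt _ ?_, ?_⟩⟩
  · have := C.three_le_len
    omega
  · rw [C.periodic.map_mod_nat, hi]

@[simp]
theorem vert_mem_verts (i : ℕ) : C.vert i ∈ C.verts := C.mem_verts.2 ⟨i, rfl⟩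

theorem exists_vert_add_eq (i : ℕ) (hv : v ∈ C.verts) : ∃ k < C.len, C.vert (i + k) = v := by
  have hlen := C.three_le_len
  obtain ⟨j, rfl⟩ := C.mem_verts.1 hv
  refine ⟨(j + (C.len - i % C.len)) % C.len, Nat.mod_lt _ (by omega), ?_⟩
  rw [C.vert_eq_vert_iff]
  have hi := Nat.mod_lt i (show 0 < C.len by omega)
  calc i + (j + (C.len - i % C.len)) % C.len
      ≡ i % C.len + (j + (C.len - i % C.len)) [MOD C.len] :=
        (Nat.mod_modEq i _).symm.add (Nat.mod_modEq _ _)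
    _ = j + C.len := by omega
    _ ≡ j [MOD C.len] := Nat.add_modEq_right

theorem exists_vert_add_eq_of_ne (hv : v ∈ C.verts) (hne : v ≠ C.vert i) :
    ∃ k, 0 < k ∧ k < C.len ∧ C.vert (i + k) = v := by
  obtain ⟨k, hk, rfl⟩ := C.exists_vert_add_eq i hv
  exact ⟨k, Nat.pos_of_ne_zero fun h => hne (by rw [h, add_zero]), hk, rfl⟩

theorem hasPathWithin_arc (i : ℕ) (hk : k < C.len) :
    HasPathWithin G (C.vert '' Set.Icc i (i + k)) (C.vert i) (C.vert (i + k)) k := by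
  induction k with
  | zero => exact .refl (by simp)
  | succ k ih =>
    have hnotMem : C.vert (i + k + 1) ∉ C.vert '' Set.Icc i (i + k) := by
      rintro ⟨j, ⟨hij, hj⟩, hjk⟩
      obtain ⟨l, rfl⟩ := Nat.exists_eq_add_of_le hij
      have := C.eq_of_vert_add_eq (by omega) hk hjk
      omega
    refine ((ih (by omega)).symm.cons (C.adj (i + k)).symm hnotMem).symm.mono ?_ le_rfl
    rintro _ (rfl | ⟨j, hj, rfl⟩)
    · exact ⟨i + k + 1, ⟨by omega, by omega⟩, rfl⟩
    · exact ⟨j, ⟨hj.1, hj.2.trans (by omega)⟩, rfl⟩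

theorem exists_vert_add_eq_of_mem_image_Icc {C : LongestCycle G} {a b : ℕ}
    (hz : z ∈ C.vert '' Set.Icc (i + a) (i + b)) : ∃ j, a ≤ j ∧ j ≤ b ∧ C.vert (i + j) = z := by
  obtain ⟨j, ⟨hj, hj'⟩, rfl⟩ := hz
  exact ⟨j - i, by omega, by omega, by congr 1; omega⟩

theorem le_len_of_hasPathWithin {l : ℕ} (hk : k < C.len)
    (h : HasPathWithin G U (C.vert i) (C.vert (i + k)) l) (hk0 : 0 < k)
    (hU : ∀ z ∈ U, ∀ j, k ≤ j → j < C.len → z = C.vert (i + j) → j = k) :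
    l + (C.len - k) ≤ C.len := by
  have hlen := C.three_le_len
  by_cases hl : l + (C.len - k) < 3
  · omega
  have harc := C.hasPathWithin_arc (i + k) (k := C.len - k) (by omega)
  rw [show i + k + (C.len - k) = i + C.len by omega, C.periodic] at harc
  have hdisj : ∀ z ∈ U, z ∈ C.vert '' Set.Icc (i + k) (i + C.len) →
      z = C.vert i ∨ z = C.vert (i + k) := by
    rintro z hz ⟨j, ⟨hj, hj'⟩, rfl⟩
    obtain ⟨m, rfl⟩ := Nat.exists_eq_add_of_le (show i ≤ j by omega)
    obtain hm | rfl : m < C.len ∨ m = C.len := by omega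
    · exact .inr (by rw [hU _ hz m (by omega) hm rfl])
    · exact .inl (C.periodic i)
  have hne : C.vert i ≠ C.vert (i + k) := fun h =>
    hk0.ne (C.eq_of_vert_add_eq (i := i) (by omega) hk h)
  obtain ⟨v, w, hw, hle⟩ := h.exists_isCycle harc hdisj hne (by omega)
  exact hle.trans (C.length_le w hw)

theorem le_of_chord {l : ℕ} (hk0 : 0 < k) (hk : k < C.len)
    (h : HasPathWithin G U (C.vert i) (C.vert (i + k)) l)
    (hU : ∀ z ∈ U, z ∈ C.verts → z = C.vert i ∨ z = C.vert (i + k)) : l ≤ k := by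
  have := C.le_len_of_hasPathWithin hk h hk0 fun z hz j hkj hj hzj => by
    subst hzj
    rcases hU _ hz (C.vert_mem_verts _) with h | h
    · have := C.eq_of_vert_add_eq (k := 0) hj (by omega) h
      omega
    · exact C.eq_of_vert_add_eq hj hk h
  omega

/-- Replace the arcs from `i` to `i + a` and from `i + s` to `i + s + b` by the two paths,
traversing the arc from `i + a` to `i + s` backwards. -/
theorem add_le_of_crossing {a b s l m : ℕ} (ha : 0 < a) (has : a ≤ s) (hb : 0 < b)
    (hsb : s + b < C.len) (h : HasPathWithin G U (C.vert i) (C.vert (i + s)) l)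
    (h' : HasPathWithin G U' (C.vert (i + a)) (C.vert (i + (s + b))) m)
    (hU : ∀ z ∈ U, z ∈ C.verts → z = C.vert i ∨ z = C.vert (i + s))
    (hU' : ∀ z ∈ U', z ∈ C.verts → z = C.vert (i + a) ∨ z = C.vert (i + (s + b)))
    (hUU' : ∀ z ∈ U, z ∈ U' → z ∈ C.verts) : l + m ≤ a + b := by
  have hU_idx {j : ℕ} (hj : j < C.len) (hjU : C.vert (i + j) ∈ U) : j = 0 ∨ j = s :=
    (hU _ hjU (C.vert_mem_verts _)).imp (C.eq_of_vert_add_eq (k := 0) hj (by omega))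
      (C.eq_of_vert_add_eq hj (by omega))
  have hU'_idx {j : ℕ} (hj : j < C.len) (hjU : C.vert (i + j) ∈ U') : j = a ∨ j = s + b :=
    (hU' _ hjU (C.vert_mem_verts _)).imp (C.eq_of_vert_add_eq hj (by omega))
      (C.eq_of_vert_add_eq hj (by omega))
  have harc := C.hasPathWithin_arc (i + a) (k := s - a) (by omega)
  rw [show i + a + (s - a) = i + s by omega] at harc
  have hback := h.trans harc.symm fun z hz hz' => by
    obtain ⟨j, hj, hj', rfl⟩ := exists_vert_add_eq_of_mem_image_Icc hz'
    rcases hU_idx (by omega) hz with h | rfl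
    · omega
    · rfl
  have hjoin := hback.trans h' fun z hz hz' => by
    rcases hz with hz | hz
    · obtain ⟨j, hj, rfl⟩ := C.exists_vert_add_eq i (hUU' z hz hz')
      have := hU_idx hj hz
      have := hU'_idx hj hz'
      obtain rfl : j = a := by omega
      rfl
    · obtain ⟨j, hj, hj', rfl⟩ := exists_vert_add_eq_of_mem_image_Icc hz
      obtain rfl : j = a := by have := hU'_idx (by omega) hz'; omega
      rfl
  have := C.le_len_of_hasPathWithin hsb hjoin (by omega) fun z hz j hj hj' hzj => by
    subst hzj
    rcases hz with (hz | hz) | hz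
    · have := hU_idx hj' hz
      omega
    · obtain ⟨j', _, _, hjj'⟩ := exists_vert_add_eq_of_mem_image_Icc hz
      have := C.eq_of_vert_add_eq (by omega) hj' hjj'
      omega
    · have := hU'_idx hj' hz
      omega
  omega

end LongestCycle

theorem IsLongestCycle.exists_longestCycle {v : V} {w : G.Walk v v} (hw : IsLongestCycle w) :
    ∃ C : LongestCycle G, C.len = w.length ∧ ∀ z, z ∈ C.verts ↔ z ∈ w.support := by
  obtain ⟨hc, hmax⟩ := hw
  have hlen := hc.three_le_length
  have hmod {i : ℕ} (hi : i ≤ w.length) : w.getVert (i % w.length) = w.getVert i := by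
    rcases hi.lt_or_eq with h | h
    · rw [Nat.mod_eq_of_lt h]
    · simp [h]
  have hinj : Set.InjOn (fun i => w.getVert (i % w.length)) (Set.Iio w.length) := by
    intro i hi j hj hij
    simp only [Nat.mod_eq_of_lt hi, Nat.mod_eq_of_lt hj] at hij
    exact hc.getVert_injOn' (Nat.le_sub_one_of_lt hi) (Nat.le_sub_one_of_lt hj) hij
  have hadj (i : ℕ) : G.Adj (w.getVert (i % w.length)) (w.getVert ((i + 1) % w.length)) := by
    have hi : i % w.length < w.length := Nat.mod_lt _ (by omega)
    rw [← Nat.mod_add_mod i w.length 1, hmod hi]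
    exact w.adj_getVert_succ hi
  refine ⟨⟨fun i => w.getVert (i % w.length), w.length, fun i => by simp, hinj, hadj, hlen,
    fun w' hw' => hmax _ w' hw'⟩, rfl, fun z => ?_⟩
  rw [LongestCycle.mem_verts, Walk.mem_support_iff_exists_getVert]
  constructor
  · rintro ⟨i, rfl⟩
    exact ⟨i % w.length, rfl, (Nat.mod_lt _ (by omega)).le⟩
  · rintro ⟨i, rfl, hi⟩
    exact ⟨i, hmod hi⟩

theorem IsLongestCycle.circumference_eq [Fintype V] {v : V} {w : G.Walk v v}
    (hw : IsLongestCycle w) : circumference G = w.length := by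
  refine csSup_eq_of_forall_le_of_forall_lt_exists_gt ⟨_, v, w, hw.1, rfl⟩ ?_ ?_
  · rintro _ ⟨u, w', hw', rfl⟩
    exact hw.2 u w' hw'
  · exact fun n hn => ⟨_, ⟨v, w, hw.1, rfl⟩, hn⟩

/-! ### Contacts and switches -/

/-- The only neighbour of `u` in `T`, or `u` itself if there are none or several. -/
noncomputable def anchor (G : SimpleGraph V) (T : Finset V) (u : V) : V :=
  if h : ∃ a, nbrsIn G T u = {a} then h.choose else u

theorem anchor_eq {T : Finset V} {a u : V} (h : nbrsIn G T u = {a}) : anchor G T u = a := by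
  have hex : ∃ a, nbrsIn G T u = {a} := ⟨a, h⟩
  rw [anchor, dif_pos hex]
  exact Finset.singleton_injective (hex.choose_spec.symm.trans h)

theorem eq_or_eq_anchor {T : Finset V} {a u : V} (ha : a ∈ T) (hua : G.Adj u a) :
    u = anchor G T u ∨ a = anchor G T u := by
  by_cases h : ∃ b, nbrsIn G T u = {b}
  · obtain ⟨b, hb⟩ := h
    have hab : a ∈ nbrsIn G T u := mem_nbrsIn.2 ⟨ha, hua⟩
    rw [hb, Finset.mem_singleton] at hab
    exact .inr (by rw [anchor_eq hb, hab])
  · exact .inl (by rw [anchor, dif_neg h])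

namespace LongestCycle

variable (C : LongestCycle G) {T N : Finset V} {D i k : ℕ} {a b u : V}

theorem sum_le_len {g : V → ℕ} (hN : N ⊆ C.verts)
    (hg : ∀ i, C.vert i ∈ N → ∀ k, 0 < k → k < g (C.vert i) → C.vert (i + k) ∉ N) :
    ∑ u ∈ N, g u ≤ C.len := by
  obtain ⟨idx, hidx⟩ : ∃ idx : V → ℕ, ∀ u ∈ N, C.vert (idx u) = u :=
    ⟨invFun C.vert, fun u hu => invFun_eq (C.mem_verts.1 (hN hu))⟩
  have key {u v : V} (hu : u ∈ N) (hv : v ∈ N) {k l : ℕ} (hl : l < g v) (hkl : k ≤ l)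
      (h : C.vert (idx u + k) = C.vert (idx v + l)) : u = v ∧ k = l := by
    obtain ⟨m, rfl⟩ := Nat.exists_eq_add_of_le' hkl
    have huv : u = C.vert (idx v + m) := by
      rw [C.vert_eq_vert_iff, ← add_assoc] at h
      exact (hidx u hu).symm.trans (C.vert_eq_vert_iff.2 (h.add_right_cancel' k))
    rcases m.eq_zero_or_pos with rfl | hm
    · rw [add_zero, hidx v hv] at huv
      exact ⟨huv, (zero_add k).symm⟩
    · refine absurd (huv ▸ hu) (hg _ ((hidx v hv).symm ▸ hv) m hm ?_)
      rw [hidx v hv]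
      omega
  rw [← C.card_verts, ← Finset.sum_congr rfl fun u _ => Finset.card_range (g u),
    ← Finset.card_sigma]
  refine Finset.card_le_card_of_injOn (fun p => C.vert (idx p.1 + p.2)) (fun p _ => by simp) ?_
  rintro ⟨u, k⟩ hu ⟨v, l⟩ hv h
  simp only [Finset.coe_sigma, Set.mem_sigma_iff, Finset.mem_coe, Finset.mem_range] at hu hv h
  rcases le_total k l with hkl | hkl
  · obtain ⟨rfl, rfl⟩ := key hu.1 hv.1 hv.2 hkl h
    rfl
  · obtain ⟨rfl, rfl⟩ := key hv.1 hu.1 hu.2 hkl h.symm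
    rfl

theorem add_two_le_of_outer_chord (hk0 : 0 < k) (hk : k < C.len) (hia : G.Adj (C.vert i) a)
    (h : HasPathWithin G {z | z ∉ C.verts} a b D) (hkb : G.Adj (C.vert (i + k)) b) :
    D + 2 ≤ k := by
  have hne : C.vert i ≠ C.vert (i + k) := fun h =>
    hk0.ne (C.eq_of_vert_add_eq (i := i) (by omega) hk h)
  exact C.le_of_chord hk0 hk (h.ear hia hkb.symm hne (by simp) (by simp)) fun z hz hzC => by
    simpa [hzC] using hz

/-- The vertices of the cycle that have a neighbour in `T`. -/
noncomputable def contacts (T : Finset V) : Finset V :=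
  {u ∈ C.verts | ∃ a ∈ T, G.Adj u a}

@[simp]
theorem mem_contacts : u ∈ C.contacts T ↔ u ∈ C.verts ∧ ∃ a ∈ T, G.Adj u a :=
  Finset.mem_filter

/-- The contacts of `T` that are followed on the cycle by at least `D + 1` non-contacts. If paths
of length `D` join the vertices of `T` outside the cycle, these are the only contacts at which the
neighbour in `T` can change. -/
noncomputable def switches (T : Finset V) (D : ℕ) : Finset V :=
  {u ∈ C.contacts T | ∀ i, C.vert i = u → ∀ k, 0 < k → k < D + 2 → C.vert (i + k) ∉ C.contacts T}

/-- Any two vertices of `T` are joined by a path of length at least `D` avoiding the cycle. -/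
structure IsWide (T : Finset V) (D : ℕ) : Prop where
  notMem : ∀ a ∈ T, a ∉ C.verts
  hasPathWithin : ∀ a ∈ T, ∀ b ∈ T, a ≠ b → HasPathWithin G {z | z ∉ C.verts} a b D
  add_two_le_len : D + 2 ≤ C.len

namespace IsWide

variable {C}

theorem two_le_of_contacts (h : C.IsWide T D) (hk0 : 0 < k) (hi : C.vert i ∈ C.contacts T)
    (hk : C.vert (i + k) ∈ C.contacts T) : 2 ≤ k := by
  have hlen := C.three_le_len
  obtain ⟨-, a, ha, hia⟩ := C.mem_contacts.1 hi
  obtain ⟨-, b, hb, hkb⟩ := C.mem_contacts.1 hk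
  by_contra! hk2
  have hpath : HasPathWithin G {z | z ∉ C.verts} a b 0 := by
    by_cases hab : a = b
    · exact hab ▸ .refl (h.notMem a ha)
    · exact (h.hasPathWithin a ha b hb hab).mono subset_rfl (Nat.zero_le _)
  have := C.add_two_le_of_outer_chord hk0 (by omega) hia hpath hkb
  omega

theorem eq_of_adj (h : C.IsWide T D) (hk0 : 0 < k) (hk : k < D + 2) (ha : a ∈ T) (hb : b ∈ T)
    (hia : G.Adj (C.vert i) a) (hkb : G.Adj (C.vert (i + k)) b) : a = b := by
  by_contra hab
  have := C.add_two_le_of_outer_chord hk0 (hk.trans_le h.add_two_le_len) hia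
    (h.hasPathWithin a ha b hb hab) hkb
  omega

theorem mem_switches (h : C.IsWide T D) (hu : u ∈ C.verts) (ha : a ∈ T) (hb : b ∈ T) (hab : a ≠ b)
    (hua : G.Adj u a) (hub : G.Adj u b) : u ∈ C.switches T D := by
  refine Finset.mem_filter.2 ⟨C.mem_contacts.2 ⟨hu, a, ha, hua⟩, ?_⟩
  rintro i rfl k hk0 hk hmem
  obtain ⟨-, d, hd, hkd⟩ := C.mem_contacts.1 hmem
  exact hab ((h.eq_of_adj hk0 hk ha hd hua hkd).trans (h.eq_of_adj hk0 hk hb hd hub hkd).symm)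

theorem two_mul_card_contacts_add_le (h : C.IsWide T D) :
    2 * (C.contacts T).card + D * (C.switches T D).card ≤ C.len := by
  have hsub : C.switches T D ⊆ C.contacts T := Finset.filter_subset _ _
  have hsum := C.sum_le_len (N := C.contacts T)
    (g := fun u => 2 + if u ∈ C.switches T D then D else 0)
    (Finset.filter_subset _ _) fun i hi k hk0 hk hmem => by
      split_ifs at hk with hs
      · exact (Finset.mem_filter.1 hs).2 i rfl k hk0 (by omega) hmem
      · have := h.two_le_of_contacts hk0 hi hmem
        omega
  rw [Finset.sum_add_distrib, ← Finset.sum_filter, Finset.filter_mem_eq_inter,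
    Finset.inter_eq_right.2 hsub] at hsum
  simpa [mul_comm] using hsum

theorem card_nbrsIn_add_card_nbrsIn_le (h : C.IsWide T D) (ha : a ∈ T) (hb : b ∈ T)
    (hab : a ≠ b) : (nbrsIn G C.verts a).card + (nbrsIn G C.verts b).card ≤
      (C.contacts T).card + (C.switches T D).card := by
  rw [← Finset.card_union_add_card_inter]
  refine add_le_add (Finset.card_le_card fun u hu => ?_) (Finset.card_le_card fun u hu => ?_)
  · simp only [Finset.mem_union, mem_nbrsIn] at hu
    rcases hu with ⟨hu, hau⟩ | ⟨hu, hbu⟩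
    · exact C.mem_contacts.2 ⟨hu, a, ha, hau.symm⟩
    · exact C.mem_contacts.2 ⟨hu, b, hb, hbu.symm⟩
  · simp only [Finset.mem_inter, mem_nbrsIn] at hu
    exact h.mem_switches hu.1.1 ha hb hab hu.1.2.symm hu.2.2.symm

theorem anchor_eq_anchor (h : C.IsWide T D) (hk0 : 0 < k) (hk : k < D + 2)
    (hi : C.vert i ∈ C.contacts T) (hik : C.vert (i + k) ∈ C.contacts T) :
    anchor G T (C.vert i) = anchor G T (C.vert (i + k)) := by
  obtain ⟨-, a, ha, hia⟩ := C.mem_contacts.1 hi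
  obtain ⟨-, b, hb, hkb⟩ := C.mem_contacts.1 hik
  obtain rfl := h.eq_of_adj hk0 hk ha hb hia hkb
  have hia' : nbrsIn G T (C.vert i) = {a} := Finset.eq_singleton_iff_unique_mem.2
    ⟨mem_nbrsIn.2 ⟨ha, hia⟩, fun d hd => h.eq_of_adj hk0 hk (mem_nbrsIn.1 hd).1 ha
      (mem_nbrsIn.1 hd).2 hkb⟩
  have hka' : nbrsIn G T (C.vert (i + k)) = {a} := Finset.eq_singleton_iff_unique_mem.2
    ⟨mem_nbrsIn.2 ⟨ha, hkb⟩, fun d hd => (h.eq_of_adj hk0 hk ha (mem_nbrsIn.1 hd).1 hia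
      (mem_nbrsIn.1 hd).2).symm⟩
  rw [anchor_eq hia', anchor_eq hka']

theorem anchor_mem_or_eq (h : C.IsWide T D) (hi : C.vert i ∈ C.contacts T)
    (hik : C.vert (i + k) ∈ C.contacts T) :
    anchor G T (C.vert i) ∈ (C.switches T D).image (anchor G T) ∨
      anchor G T (C.vert i) = anchor G T (C.vert (i + k)) := by
  induction k using Nat.strong_induction_on generalizing i with
  | _ k ih =>
    obtain rfl | hk0 := k.eq_zero_or_pos
    · exact .inr rfl
    by_cases hkD : k < D + 2
    · exact .inr (h.anchor_eq_anchor hk0 hkD hi hik)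
    by_cases hs : C.vert i ∈ C.switches T D
    · exact .inl (Finset.mem_image_of_mem _ hs)
    obtain ⟨j, hj, l, hl0, hl, hjl⟩ : ∃ j, C.vert j = C.vert i ∧ ∃ l, 0 < l ∧ l < D + 2 ∧
        C.vert (j + l) ∈ C.contacts T := by
      simp only [switches, Finset.mem_filter, hi, true_and] at hs
      push Not at hs
      exact hs
    rw [C.vert_eq_vert_iff.2 ((C.vert_eq_vert_iff.1 hj).add_right l)] at hjl
    rw [h.anchor_eq_anchor hl0 hl hi hjl]
    have hsplit : i + k = i + l + (k - l) := by omega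
    rw [hsplit] at hik ⊢
    exact ih _ (by omega) hjl hik

theorem exists_cover (h : C.IsWide T D) : ∃ S : Finset V, S.card ≤ max 1 (C.switches T D).card ∧
    ∀ u ∈ C.verts, ∀ a ∈ T, G.Adj u a → u ∈ S ∨ a ∈ S := by
  suffices ∃ S : Finset V, S.card ≤ max 1 (C.switches T D).card ∧
      ∀ u ∈ C.contacts T, anchor G T u ∈ S by
    obtain ⟨S, hcard, hS⟩ := this
    refine ⟨S, hcard, fun u hu a ha hua => ?_⟩
    have hmem := hS u (C.mem_contacts.2 ⟨hu, a, ha, hua⟩)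
    exact (eq_or_eq_anchor ha hua).imp (fun h => by rwa [h]) fun h => by rwa [h]
  have key {u v : V} (hu : u ∈ C.contacts T) (hv : v ∈ C.contacts T) :
      anchor G T u ∈ (C.switches T D).image (anchor G T) ∨ anchor G T u = anchor G T v := by
    obtain ⟨i, rfl⟩ := C.mem_verts.1 (C.mem_contacts.1 hu).1
    obtain ⟨k, -, rfl⟩ := C.exists_vert_add_eq i (C.mem_contacts.1 hv).1
    exact h.anchor_mem_or_eq hu hv
  rcases (C.switches T D).eq_empty_or_nonempty with hSw | ⟨v, hv⟩
  · rcases (C.contacts T).eq_empty_or_nonempty with hN | ⟨v, hv⟩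
    · exact ⟨∅, by simp, by simp [hN]⟩
    · refine ⟨{anchor G T v}, by simp, fun u hu => ?_⟩
      simpa [hSw] using key hu hv
  · refine ⟨(C.switches T D).image (anchor G T), le_max_of_le_right Finset.card_image_le,
      fun u hu => ?_⟩
    rcases key hu (Finset.mem_filter.1 hv).1 with h | h
    · exact h
    · exact h ▸ Finset.mem_image_of_mem _ hv

theorem two_mul_card_nbrsIn_add_le (h : C.IsWide T D) (hD : 2 ≤ D) (ha : a ∈ T) (hb : b ∈ T)
    (hab : a ≠ b) : 2 * ((nbrsIn G C.verts a).card + (nbrsIn G C.verts b).card) +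
      (D - 2) * (C.switches T D).card ≤ C.len := by
  have hcount := h.two_mul_card_contacts_add_le
  have hdeg := h.card_nbrsIn_add_card_nbrsIn_le ha hb hab
  obtain ⟨E, rfl⟩ := Nat.exists_eq_add_of_le' hD
  rw [add_mul] at hcount
  rw [Nat.add_sub_cancel]
  omega

end IsWide

end LongestCycle

/-! ### Components outside a longest cycle -/

theorem hasPathWithin_of_forall_erase {H : Finset V} {D : ℕ} {a b w : V}
    (hreach : ∀ y ∈ H, ∀ u ∈ H, ∀ v ∈ H, u ≠ y → v ≠ y → ReachableWithin G (H.erase y) u v)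
    (hdeg : ∀ v ∈ H, v ≠ w → D ≤ (nbrsIn G H v).card) (hcard : 3 ≤ H.card) (ha : a ∈ H)
    (hb : b ∈ H) (hab : a ≠ b) : HasPathWithin G H a b (max D 2) := by
  have hblock : IsAlmostBlock G H a b := by
    refine ⟨ha, hb, hab, fun y hy v hv hvy => ?_⟩
    by_cases hay : a = y
    · exact .inr (hreach y hy v hv b hb hvy (hay ▸ hab.symm))
    · exact .inl (hreach y hy v hv a ha hvy hay)
  by_cases hz : ∃ z ∈ H, z ≠ a ∧ z ≠ b ∧ z ≠ w
  · exact hblock.hasPathWithin (fun v hv _ _ hvw => hdeg v hv hvw) hz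
  push Not at hz
  obtain ⟨z, hzH, hza⟩ : ∃ z ∈ H, z ∉ ({a, b} : Finset V) :=
    Finset.exists_mem_notMem_of_card_lt_card (Finset.card_le_two.trans_lt hcard)
  simp only [Finset.mem_insert, Finset.mem_singleton, not_or] at hza
  have haw : a ≠ w := fun h => hza.1 ((hz z hzH hza.1 hza.2).trans h.symm)
  have hsub : nbrsIn G H a ⊆ {b, w} := fun v hv => by
    rw [mem_nbrsIn] at hv
    simpa [or_iff_not_imp_left] using hz v hv.1 hv.2.ne'
  have hD : D ≤ 2 := (hdeg a ha haw).trans ((Finset.card_le_card hsub).trans Finset.card_le_two)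
  rw [max_eq_right hD]
  exact hblock.hasPathWithin (D := 0) (w := a) (fun v _ _ _ _ => Nat.zero_le _)
    ⟨z, hzH, hza.1, hza.2, hza.1⟩

namespace LongestCycle

variable {C : LongestCycle G} {H : Finset V} {D δ k : ℕ}

theorem exists_ne_mem_verts (C : LongestCycle G) (u : V) : ∃ v ∈ C.verts, v ≠ u :=
  Finset.exists_mem_ne (by rw [card_verts]; have := C.three_le_len; omega) u

/-- `H` is a component of the graph obtained by deleting the cycle. -/
structure IsOuterComponent (C : LongestCycle G) (H : Finset V) : Prop where
  notMem : ∀ v ∈ H, v ∉ C.verts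
  mem_or_mem : ∀ p ∈ H, ∀ q, G.Adj p q → q ∈ H ∨ q ∈ C.verts
  reachableWithin : ∀ p ∈ H, ∀ q ∈ H, ReachableWithin G H p q

namespace IsOuterComponent

theorem exists_adj [Fintype V] (hH : C.IsOuterComponent H) (hG : KConnected G k) {S : Finset V}
    (hS : S.card < k) {a u : V} (ha : a ∈ H) (haS : a ∉ S) (hu : u ∈ C.verts) (huS : u ∉ S) :
    ∃ p ∈ H, ∃ q ∈ C.verts, p ∉ S ∧ q ∉ S ∧ G.Adj p q := by
  obtain ⟨p, hp, q, hq, hpS, hqS, hpq⟩ :=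
    hG.exists_adj hS ha haS (fun h => hH.notMem u h hu) huS
  exact ⟨p, hp, q, (hH.mem_or_mem p hp q hpq).resolve_left hq, hpS, hqS, hpq⟩

theorem isWide [Fintype V] (hH : C.IsOuterComponent H) (hG : KConnected G 3) (hcard : 1 < H.card)
    (hpath : ∀ a ∈ H, ∀ b ∈ H, a ≠ b → HasPathWithin G H a b D) : C.IsWide H D := by
  have hpath' : ∀ a ∈ H, ∀ b ∈ H, a ≠ b → HasPathWithin G {z | z ∉ C.verts} a b D :=
    fun a ha b hb hab => (hpath a ha b hb hab).mono hH.notMem le_rfl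
  refine ⟨hH.notMem, hpath', ?_⟩
  obtain ⟨a, ha⟩ := Finset.card_pos.1 (by omega : 0 < H.card)
  obtain ⟨p, hp, q, hq, -, -, hpq⟩ := hH.exists_adj hG (S := ∅) (by simp) ha (by simp)
    (C.vert_mem_verts 0) (by simp)
  obtain ⟨b, hb, hbp⟩ := Finset.exists_mem_ne hcard p
  obtain ⟨v, hv, hvq⟩ := C.exists_ne_mem_verts q
  have hne : ∀ x ∈ H, ∀ y ∈ C.verts, x ≠ y := fun x hx y hy hxy => hH.notMem x hx (hxy ▸ hy)
  obtain ⟨p', hp', q', hq', hpS, hqS, hpq'⟩ := hH.exists_adj hG (S := {p, q})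
    (Finset.card_le_two.trans_lt (by norm_num)) hb (by simp [hbp, hne b hb q hq]) hv
    (by simp [hvq, (hne p hp v hv).symm])
  simp only [Finset.mem_insert, Finset.mem_singleton, not_or] at hpS hqS
  obtain ⟨i, rfl⟩ := C.mem_verts.1 hq
  obtain ⟨l, hl0, hl, rfl⟩ := C.exists_vert_add_eq_of_ne hq' hqS.2
  exact (C.add_two_le_of_outer_chord hl0 hl hpq.symm
    (hpath' p hp p' hp' (Ne.symm hpS.1)) hpq'.symm).trans hl.le

theorem le_card_switches [Fintype V] (hH : C.IsOuterComponent H) (hG : KConnected G k)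
    (hwide : C.IsWide H D) (hk : 1 < k) (hkH : k ≤ H.card) (hkC : k ≤ C.len) :
    k ≤ (C.switches H D).card := by
  obtain ⟨S, hScard, hS⟩ := hwide.exists_cover
  by_contra! hlt
  have hSk : S.card < k := by omega
  obtain ⟨a, ha, haS⟩ := Finset.exists_mem_notMem_of_card_lt_card (hSk.trans_le hkH)
  obtain ⟨u, hu, huS⟩ := Finset.exists_mem_notMem_of_card_lt_card
    (hSk.trans_le (hkC.trans_eq C.card_verts.symm))
  obtain ⟨p, hp, q, hq, hpS, hqS, hpq⟩ := hH.exists_adj hG hSk ha haS hu huS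
  exact (hS q hq p hp hpq.symm).elim hqS hpS

theorem four_mul_le_of_forall_erase [Fintype V] (hH : C.IsOuterComponent H) (hG : KConnected G 4)
    (hdeg : ∀ v ∈ H, δ ≤ (nbrsIn G C.verts v).card + (nbrsIn G H v).card) (hcard : 3 ≤ H.card)
    (hreach : ∀ y ∈ H, ∀ u ∈ H, ∀ v ∈ H, u ≠ y → v ≠ y → ReachableWithin G (H.erase y) u v) :
    4 * δ ≤ C.len + 8 := by
  obtain ⟨h₀, hh₀, hmax₀⟩ := H.exists_max_image (fun v => (nbrsIn G C.verts v).card)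
    (Finset.card_pos.1 (by omega))
  obtain ⟨h₁, hh₁, hmax₁⟩ := (H.erase h₀).exists_max_image (fun v => (nbrsIn G C.verts v).card)
    (Finset.card_pos.1 (by rw [Finset.card_erase_of_mem hh₀]; omega))
  rw [Finset.mem_erase] at hh₁
  have hle := hmax₀ h₁ hh₁.2
  have hpath : ∀ a ∈ H, ∀ b ∈ H, a ≠ b →
      HasPathWithin G H a b (max (δ - (nbrsIn G C.verts h₁).card) 2) := fun a ha b hb hab =>
    hasPathWithin_of_forall_erase (w := h₀) hreach (fun v hv hv₀ => by
      have := hmax₁ v (Finset.mem_erase.2 ⟨hv₀, hv⟩)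
      have := hdeg v hv
      omega) hcard ha hb hab
  have hwide := hH.isWide (hG.mono (by norm_num)) (by omega) hpath
  have hcount := hwide.two_mul_card_nbrsIn_add_le (le_max_right _ _) hh₀ hh₁.2 hh₁.1.symm
  by_cases hd : δ ≤ (nbrsIn G C.verts h₁).card + 2
  · omega
  · have hsub : nbrsIn G H h₁ ⊆ H.erase h₁ := fun z hz => by
      rw [mem_nbrsIn] at hz
      exact Finset.mem_erase.2 ⟨hz.2.ne', hz.1⟩
    have hsub := Finset.card_le_card hsub
    rw [Finset.card_erase_of_mem hh₁.2] at hsub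
    have := hdeg h₁ hh₁.2
    have := hwide.add_two_le_len
    have hSw := hH.le_card_switches hG hwide (by norm_num) (by omega) (by omega)
    have := Nat.mul_le_mul_left (max (δ - (nbrsIn G C.verts h₁).card) 2 - 2) hSw
    omega

end IsOuterComponent

end LongestCycle

/-- A lobe of `H` at `x`: a nonempty connected part `K` of `H` that is joined to `x` and to no other
vertex of `H` outside `K`. -/
structure IsLobe (G : SimpleGraph V) (H K : Finset V) (x : V) : Prop where
  subset : K ⊆ H
  mem : x ∈ H
  notMem : x ∉ K
  mem_or_eq : ∀ k ∈ K, ∀ e ∈ H, G.Adj k e → e ∈ K ∨ e = x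
  reachableWithin : ∀ a ∈ K, ∀ b ∈ K, ReachableWithin G K a b
  exists_adj : ∃ k ∈ K, G.Adj k x

theorem isLobe_componentWithin {H : Finset V} {v y : V} (hy : y ∈ H) (hv : v ∈ H.erase y)
    (hvy : ReachableWithin G H v y) : IsLobe G H (componentWithin G (H.erase y) v) y := by
  have hsub := componentWithin_subset (G := G) (H.erase y) v
  have hyK : y ∉ componentWithin G (H.erase y) v := fun h => Finset.notMem_erase y H (hsub h)
  have hclosed : ∀ k ∈ componentWithin G (H.erase y) v, ∀ e ∈ H, G.Adj k e →
      e ∈ componentWithin G (H.erase y) v ∨ e = y := by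
    intro k hk e he hke
    rw [or_iff_not_imp_right]
    rw [mem_componentWithin] at hk ⊢
    exact fun hey => hk.step hke (Finset.mem_erase.2 ⟨hey, he⟩)
  refine ⟨hsub.trans (Finset.erase_subset _ _), hy, hyK, hclosed, fun a ha b hb =>
    (reachableWithin_componentWithin ha).symm.trans (reachableWithin_componentWithin hb), ?_⟩
  obtain ⟨k, hk, e, he, hke, -⟩ := hvy.exists_exit
    (K := componentWithin G (H.erase y) v) (mem_componentWithin.2 (.refl hv)) hyK
  obtain rfl := (hclosed k hk e he.1 hke).resolve_left he.2
  exact ⟨k, hk, hke⟩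

namespace IsLobe

variable {C : LongestCycle G} {H K : Finset V} {δ : ℕ} {a u v x y : V}

theorem le_card_add_card (hK : IsLobe G H K x)
    (hdeg : ∀ v ∈ H, δ ≤ (nbrsIn G C.verts v).card + (nbrsIn G H v).card) (hv : v ∈ K) :
    δ ≤ (nbrsIn G C.verts v).card + (nbrsIn G (insert x K) v).card := by
  refine (hdeg v (hK.subset hv)).trans (Nat.add_le_add_left (Finset.card_le_card fun z hz => ?_) _)
  rw [mem_nbrsIn] at hz ⊢
  exact ⟨Finset.mem_insert.2 (hK.mem_or_eq v hv z hz.1 hz.2).symm, hz.2⟩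

/-- If the vertices of `K` have at most one neighbour each on the cycle, then every vertex with
such a neighbour has maximal degree into the cycle, and `{x, u}` does not separate `K` from it. -/
theorem exists_max_contact [Fintype V] (hK : IsLobe G H K x) (hH : C.IsOuterComponent H)
    (hG : KConnected G 3) (hu : u ∈ C.verts) :
    ∃ a ∈ K, (∀ v ∈ K, (nbrsIn G C.verts v).card ≤ (nbrsIn G C.verts a).card) ∧
      ∃ u' ∈ C.verts, u' ≠ u ∧ G.Adj a u' := by
  obtain ⟨k, hk, -⟩ := hK.exists_adj
  obtain ⟨m, hm, hmax⟩ := K.exists_max_image (fun v => (nbrsIn G C.verts v).card) ⟨k, hk⟩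
  by_cases hm2 : 1 < (nbrsIn G C.verts m).card
  · obtain ⟨u', hu', hne⟩ := Finset.exists_mem_ne hm2 u
    rw [mem_nbrsIn] at hu'
    exact ⟨m, hm, hmax, u', hu'.1, hne, hu'.2⟩
  obtain ⟨b, hb, hbu⟩ := C.exists_ne_mem_verts u
  have hbx : b ≠ x := fun h => hH.notMem x hK.mem (h ▸ hb)
  have hku : k ≠ u := fun h => hH.notMem k (hK.subset hk) (h ▸ hu)
  have hkx : k ≠ x := fun h => hK.notMem (h ▸ hk)
  obtain ⟨p, hp, q, hq, -, hqS, hpq⟩ := hG.exists_adj (S := {x, u}) (A := K)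
    (Finset.card_le_two.trans_lt (by norm_num)) hk (by simp [hkx, hku])
    (fun h => hH.notMem b (hK.subset h) hb) (by simp [hbx, hbu])
  simp only [Finset.mem_insert, Finset.mem_singleton, not_or] at hqS
  have hqC : q ∈ C.verts := (hH.mem_or_mem p (hK.subset hp) q hpq).resolve_left fun h =>
    (hK.mem_or_eq p hp q h hpq).elim hq hqS.1
  have hp0 : 0 < (nbrsIn G C.verts p).card := Finset.card_pos.2 ⟨q, mem_nbrsIn.2 ⟨hqC, hpq⟩⟩
  exact ⟨p, hp, fun v hv => by have := hmax v hv; omega, q, hqC, hqS.2, hpq⟩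

theorem isAlmostBlock (hK : IsLobe G H K x) (ha : a ∈ K)
    (hreach : ∀ y ∈ K, ∀ v ∈ K, v ≠ y → ReachableWithin G ((insert x K).erase y) v x) :
    IsAlmostBlock G (insert x K) a x := by
  have hax : a ≠ x := fun h => hK.notMem (h ▸ ha)
  refine ⟨by simp [ha], by simp, hax, fun y hy v hv hvy => ?_⟩
  rw [Finset.mem_insert] at hy hv
  rcases hv with rfl | hv
  · exact .inr (.refl (by simp [hvy]))
  rcases hy with rfl | hy
  · exact .inl ((hK.reachableWithin v hv a ha).mono (by
      rw [Finset.erase_insert hK.notMem]))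
  · exact .inr (hreach y hy v hv hvy)

theorem hasPathWithin_of_forall_erase (hK : IsLobe G H K x)
    (hdeg : ∀ v ∈ H, δ ≤ (nbrsIn G C.verts v).card + (nbrsIn G H v).card) (ha : a ∈ K)
    (hmax : ∀ v ∈ K, (nbrsIn G C.verts v).card ≤ (nbrsIn G C.verts a).card)
    (hreach : ∀ y ∈ K, ∀ v ∈ K, v ≠ y → ReachableWithin G ((insert x K).erase y) v x) :
    HasPathWithin G (insert x K : Finset V) a x (max 1 (δ - (nbrsIn G C.verts a).card)) := by
  by_cases hz : ∃ z ∈ K, z ≠ a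
  · obtain ⟨z, hz, hza⟩ := hz
    have hzx : z ≠ x := fun h => hK.notMem (h ▸ hz)
    refine ((hK.isAlmostBlock ha hreach).hasPathWithin (w := a) (fun v hv _ hvx _ => ?_)
      ⟨z, by simp [hz], hza, hzx, hza⟩).mono subset_rfl (by rw [max_comm]; gcongr; norm_num)
    have hv : v ∈ K := Finset.mem_of_mem_insert_of_ne hv hvx
    have := hK.le_card_add_card hdeg hv
    have := hmax v hv
    omega
  · push Not at hz
    obtain ⟨k, hk, hkx⟩ := hK.exists_adj
    obtain rfl := hz k hk
    have hsub : nbrsIn G (insert x K) k ⊆ {x} := fun z hz' => by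
      rw [mem_nbrsIn, Finset.mem_insert] at hz'
      simpa using hz'.1.resolve_right fun h => hz'.2.ne (hz z h).symm
    have := (Finset.card_le_card hsub).trans_eq (Finset.card_singleton x)
    have := hK.le_card_add_card hdeg hk
    exact (HasPathWithin.of_adj hkx (by simp [hk]) (by simp)).mono subset_rfl (by omega)

theorem componentWithin_erase_ssubset (hK : IsLobe G H K x) (hy : y ∈ K) (hv : v ∈ K)
    (hvx : ¬ ReachableWithin G ((insert x K).erase y) v x) :
    componentWithin G (H.erase y) v ⊂ K := by
  have hyK' : y ∉ componentWithin G (H.erase y) v := fun h =>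
    Finset.notMem_erase y H (componentWithin_subset _ _ h)
  refine (Finset.ssubset_iff_of_subset fun z hz => ?_).2 ⟨y, hy, hyK'⟩
  by_contra hzK
  obtain ⟨k, hk, e, he, hke, hvk⟩ := (mem_componentWithin.1 hz).exists_exit (K := K) hv hzK
  have hmem := Finset.mem_erase.1 he.1
  obtain rfl := (hK.mem_or_eq k hk e hmem.2 hke).resolve_left he.2
  refine hvx ((hvk.mono fun w hw => ?_).step hke (by simp [hmem.1]))
  exact Finset.mem_erase.2 ⟨(Finset.mem_erase.1 hw.1).1, Finset.mem_insert_of_mem hw.2⟩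

/-- If a vertex `y` separates part of the lobe from `x`, that part is a smaller lobe at `y`, and a
path found there can be continued from `y` to `x`. -/
theorem exists_hasPathWithin [Fintype V] (hK : IsLobe G H K x) (hH : C.IsOuterComponent H)
    (hG : KConnected G 3) (hdeg : ∀ v ∈ H, δ ≤ (nbrsIn G C.verts v).card + (nbrsIn G H v).card)
    (hu : u ∈ C.verts) : ∃ a ∈ K, (∃ u' ∈ C.verts, u' ≠ u ∧ G.Adj a u') ∧
      HasPathWithin G (insert x K : Finset V) a x (max 1 (δ - (nbrsIn G C.verts a).card)) := by
  induction K using Finset.strongInduction generalizing x with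
  | H K ih =>
  by_cases hreach : ∀ y ∈ K, ∀ v ∈ K, v ≠ y → ReachableWithin G ((insert x K).erase y) v x
  · obtain ⟨a, ha, hmax, hau⟩ := hK.exists_max_contact hH hG hu
    exact ⟨a, ha, hau, hK.hasPathWithin_of_forall_erase hdeg ha hmax hreach⟩
  push Not at hreach
  obtain ⟨y, hy, v, hv, hvy, hvx⟩ := hreach
  have hss := hK.componentWithin_erase_ssubset hy hv hvx
  have hvH : v ∈ H.erase y := Finset.mem_erase.2 ⟨hvy, hK.subset hv⟩
  have hK' := isLobe_componentWithin (hK.subset hy) hvH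
    (hH.reachableWithin v (hK.subset hv) y (hK.subset hy))
  obtain ⟨a, ha, hau, hpath⟩ := ih _ hss hK'
  refine ⟨a, hss.subset ha, hau, ?_⟩
  obtain ⟨k, hk, hkx⟩ := hK.exists_adj
  have hyx : ReachableWithin G (insert x K : Finset V) y x :=
    ((hK.reachableWithin y hy k hk).mono (by simp)).step hkx (by simp)
  have hvK' : v ∈ componentWithin G (H.erase y) v := mem_componentWithin.2 (.refl hvH)
  have htail := hyx.hasPathWithin_diff hK'.notMem fun z hz hzx => hvx <| by
    refine ((hK'.reachableWithin v hvK' z hz).mono fun w hw => ?_).trans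
      (hzx.mono (by simp))
    exact Finset.mem_erase.2 ⟨fun h => hK'.notMem (h ▸ hw), by simp [hss.subset hw]⟩
  refine (hpath.trans htail fun z hz hz' => ?_).mono ?_ le_rfl
  · exact (Finset.mem_insert.1 hz).resolve_right hz'.2
  · rintro z (hz | hz)
    · rcases Finset.mem_insert.1 hz with rfl | hz
      · simp [hy]
      · simp [hss.subset hz]
    · exact hz.1

end IsLobe

namespace LongestCycle

variable {C : LongestCycle G} {H : Finset V} {D δ : ℕ} {a b d y u v : V}

theorem isWide_pair (ha : a ∉ C.verts) (hb : b ∉ C.verts)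
    (hab : HasPathWithin G {z | z ∉ C.verts} a b D) (hu : u ∈ C.verts) (hv : v ∈ C.verts)
    (huv : u ≠ v) (hau : G.Adj a u) (hbv : G.Adj b v) : C.IsWide {a, b} D := by
  refine ⟨by simp [ha, hb], by simp +contextual [hab, hab.symm], ?_⟩
  obtain ⟨i, rfl⟩ := C.mem_verts.1 hu
  obtain ⟨k, hk0, hk, rfl⟩ := C.exists_vert_add_eq_of_ne hv huv.symm
  exact (C.add_two_le_of_outer_chord hk0 hk hau.symm hab hbv.symm).trans hk.le

theorem IsWide.two_le_card_switches_pair (h : C.IsWide {a, b} D) (hab : a ≠ b) (hu : u ∈ C.verts)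
    (hv : v ∈ C.verts) (huv : u ≠ v) (hau : G.Adj a u) (hbv : G.Adj b v) :
    2 ≤ (C.switches {a, b} D).card := by
  obtain ⟨S, hScard, hS⟩ := h.exists_cover
  by_contra! hlt
  have hSone := Finset.card_le_one.1 (show S.card ≤ 1 by omega)
  have ha := h.notMem a (by simp)
  have hb := h.notMem b (by simp)
  rcases hS u hu a (by simp) hau.symm with hu' | ha' <;>
    rcases hS v hv b (by simp) hbv.symm with hv' | hb'
  · exact huv (hSone u hu' v hv')
  · exact hb (hSone u hu' b hb' ▸ hu)
  · exact ha (hSone a ha' v hv' ▸ hv)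
  · exact hab (hSone a ha' b hb')

namespace IsOuterComponent

theorem four_mul_le_of_not_reachableWithin_erase [Fintype V] (hH : C.IsOuterComponent H)
    (hG : KConnected G 3) (hdeg : ∀ v ∈ H, δ ≤ (nbrsIn G C.verts v).card + (nbrsIn G H v).card)
    (hy : y ∈ H) (ha : a ∈ H.erase y) (hb : b ∈ H.erase y)
    (hab : ¬ ReachableWithin G (H.erase y) a b) : 4 * δ ≤ C.len + 4 := by
  have hlobe {v : V} (hv : v ∈ H.erase y) : IsLobe G H (componentWithin G (H.erase y) v) y :=
    isLobe_componentWithin hy hv (hH.reachableWithin v (Finset.mem_of_mem_erase hv) y hy)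
  obtain ⟨h₂, hh₂, ⟨u₂, hu₂, -, hadj₂⟩, hpath₂⟩ :=
    (hlobe hb).exists_hasPathWithin hH hG hdeg (C.vert_mem_verts 0)
  obtain ⟨h₁, hh₁, ⟨u₁, hu₁, hne, hadj₁⟩, hpath₁⟩ :=
    (hlobe ha).exists_hasPathWithin hH hG hdeg hu₂
  have hdisj : ∀ z ∈ componentWithin G (H.erase y) a, z ∉ componentWithin G (H.erase y) b :=
    fun z hza hzb => hab
      ((mem_componentWithin.1 hza).trans (mem_componentWithin.1 hzb).symm)
  have hpath := hpath₁.trans hpath₂.symm fun z hz hz' => by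
    rw [Finset.mem_coe, Finset.mem_insert] at hz hz'
    exact hz.resolve_right fun h => hz'.elim (fun hzy => (hlobe ha).notMem (hzy ▸ h)) (hdisj z h)
  have hout := hpath.mono (U' := {z | z ∉ C.verts}) (by
    rintro z (hz | hz) <;> rcases Finset.mem_insert.1 hz with rfl | hz
    · exact hH.notMem _ hy
    · exact hH.notMem z ((hlobe ha).subset hz)
    · exact hH.notMem _ hy
    · exact hH.notMem z ((hlobe hb).subset hz)) le_rfl
  have hne' : h₁ ≠ h₂ := fun h => hdisj h₁ hh₁ (h ▸ hh₂)
  have hwide := isWide_pair (hH.notMem _ ((hlobe ha).subset hh₁))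
    (hH.notMem _ ((hlobe hb).subset hh₂)) hout hu₁ hu₂ hne hadj₁ hadj₂
  have hcount := hwide.two_mul_card_nbrsIn_add_le (by omega) (by simp) (by simp) hne'
  have := Nat.mul_le_mul_left
    (max 1 (δ - (nbrsIn G C.verts h₁).card) + max 1 (δ - (nbrsIn G C.verts h₂).card) - 2)
    (hwide.two_le_card_switches_pair hne' hu₁ hu₂ hne hadj₁ hadj₂)
  omega

end IsOuterComponent

theorem isOuterComponent_componentWithin [Fintype V] (C : LongestCycle G) (v : V) :
    C.IsOuterComponent (componentWithin G C.vertsᶜ v) := by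
  refine ⟨fun z hz => Finset.mem_compl.1 (componentWithin_subset _ _ hz), fun p hp q hpq => ?_,
    fun p hp q hq => (reachableWithin_componentWithin hp).symm.trans
      (reachableWithin_componentWithin hq)⟩
  rw [or_iff_not_imp_right]
  rw [mem_componentWithin] at hp ⊢
  exact fun hq => hp.step hpq (by simpa using hq)

theorem four_mul_le_of_outer_path [Fintype V] (C : LongestCycle G) (hG : KConnected G 4)
    (hδ : ∀ v, δ ≤ (nbrsIn G Finset.univ v).card) (ha : a ∉ C.verts) (hb : b ∉ C.verts)
    (hd : d ∉ C.verts) (hab : G.Adj a b) (hbd : G.Adj b d) (had : a ≠ d) :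
    4 * δ ≤ C.len + 8 := by
  have hH := C.isOuterComponent_componentWithin b
  set H := componentWithin G C.vertsᶜ b with hHdef
  have hdeg : ∀ v ∈ H, δ ≤ (nbrsIn G C.verts v).card + (nbrsIn G H v).card := fun v hv => by
    refine (hδ v).trans ((Finset.card_le_card fun w hw => ?_).trans (Finset.card_union_le _ _))
    rw [mem_nbrsIn] at hw
    rw [Finset.mem_union, mem_nbrsIn, mem_nbrsIn]
    exact (hH.mem_or_mem v hv w hw.2).symm.imp (⟨·, hw.2⟩) (⟨·, hw.2⟩)
  have hcard : 3 ≤ H.card := by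
    rw [← Finset.card_eq_three.2 ⟨a, b, d, hab.ne, had, hbd.ne, rfl⟩]
    have hbb : ReachableWithin G (C.vertsᶜ : Finset V) b b := .refl (by simpa using hb)
    refine Finset.card_le_card ?_
    simp only [Finset.insert_subset_iff, Finset.singleton_subset_iff, hHdef, mem_componentWithin]
    exact ⟨hbb.step hab.symm (by simpa using ha), hbb, hbb.step hbd (by simpa using hd)⟩
  by_cases hreach : ∀ y ∈ H, ∀ u ∈ H, ∀ v ∈ H, u ≠ y → v ≠ y → ReachableWithin G (H.erase y) u v
  · exact hH.four_mul_le_of_forall_erase hG hdeg hcard hreach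
  · push Not at hreach
    obtain ⟨y, hy, u, hu, v, hv, huy, hvy, huv⟩ := hreach
    have := hH.four_mul_le_of_not_reachableWithin_erase (hG.mono (by norm_num)) hdeg hy
      (Finset.mem_erase.2 ⟨huy, hu⟩) (Finset.mem_erase.2 ⟨hvy, hv⟩) huv
    omega

end LongestCycle

/-! ### Isolated edges outside a longest cycle -/

namespace LongestCycle

variable {C : LongestCycle G} {U U' : Set V} {a b l m : ℕ} {u v w z : V}

/-- The vertex following `v` on the cycle; junk if `v` is not on the cycle. -/
noncomputable def next (C : LongestCycle G) (v : V) : V := C.vert (invFun C.vert v + 1)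

@[simp]
theorem next_vert (C : LongestCycle G) (i : ℕ) : C.next (C.vert i) = C.vert (i + 1) :=
  C.vert_eq_vert_iff.2 ((C.vert_eq_vert_iff.1 (invFun_eq ⟨i, rfl⟩)).add_right 1)

theorem iterate_next_vert (C : LongestCycle G) (i a : ℕ) :
    C.next^[a] (C.vert i) = C.vert (i + a) := by
  induction a with
  | zero => rfl
  | succ a ih => rw [iterate_succ_apply', ih, next_vert, add_assoc]

theorem iterate_next_mem_verts (hv : v ∈ C.verts) : C.next^[a] v ∈ C.verts := by
  obtain ⟨i, rfl⟩ := C.mem_verts.1 hv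
  rw [iterate_next_vert]
  exact C.vert_mem_verts _

@[simp]
theorem next_mem_verts (v : V) : C.next v ∈ C.verts := C.vert_mem_verts _

theorem next_injOn (C : LongestCycle G) : Set.InjOn C.next C.verts := by
  intro u hu v hv h
  obtain ⟨i, rfl⟩ := C.mem_verts.1 hu
  obtain ⟨j, rfl⟩ := C.mem_verts.1 hv
  rw [next_vert, next_vert, C.vert_eq_vert_iff] at h
  exact C.vert_eq_vert_iff.2 (h.add_right_cancel' 1)

theorem adj_next (hv : v ∈ C.verts) : G.Adj v (C.next v) := by
  obtain ⟨i, rfl⟩ := C.mem_verts.1 hv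
  exact (C.next_vert i).symm ▸ C.adj i

theorem not_adj_next_of_adj (hz : z ∉ C.verts) (hu : u ∈ C.verts) (hzu : G.Adj z u) :
    ¬ G.Adj z (C.next u) := by
  intro hadj
  obtain ⟨i, rfl⟩ := C.mem_verts.1 hu
  have hlen := C.three_le_len
  rw [next_vert] at hadj
  have := C.add_two_le_of_outer_chord one_pos (by omega) hzu.symm (.refl hz) hadj.symm
  omega

theorem add_le_of_crossing_next (hu : u ∈ C.verts) (hv : v ∈ C.verts) (ha : 0 < a) (hb : 0 < b)
    (hau : ∀ j < a, C.next^[j] u ≠ v) (hbv : ∀ j ≤ b, C.next^[j] v ≠ u)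
    (h : HasPathWithin G U u v l) (h' : HasPathWithin G U' (C.next^[a] u) (C.next^[b] v) m)
    (hU : ∀ z ∈ U, z ∈ C.verts → z = u ∨ z = v)
    (hU' : ∀ z ∈ U', z ∈ C.verts → z = C.next^[a] u ∨ z = C.next^[b] v)
    (hUU' : ∀ z ∈ U, z ∈ U' → z ∈ C.verts) : l + m ≤ a + b := by
  obtain ⟨i, rfl⟩ := C.mem_verts.1 hu
  obtain ⟨s, hs, rfl⟩ := C.exists_vert_add_eq i hv
  simp only [iterate_next_vert, add_assoc] at hau hbv h' hU'
  have has : a ≤ s := le_of_not_gt fun h => hau s h rfl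
  have hsb : s + b < C.len := by
    by_contra! hlt
    refine hbv (C.len - s) (by omega) ?_
    rw [Nat.add_sub_of_le hs.le, C.periodic]
  exact C.add_le_of_crossing ha has hb hsb h h' hU hU' hUU'

/-- An edge `xy` outside the cycle, in a graph where every component outside the cycle has at most
two vertices; the last condition is expressed by the absence of paths on three vertices. -/
structure OuterEdge (C : LongestCycle G) where
  x : V
  y : V
  x_notMem : x ∉ C.verts
  y_notMem : y ∉ C.verts
  adj : G.Adj x y
  eq_of_adj_adj : ∀ a b d, a ∉ C.verts → b ∉ C.verts → d ∉ C.verts → G.Adj a b → G.Adj b d → a = d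

namespace OuterEdge

variable (e : C.OuterEdge)

theorem isWide : C.IsWide {e.x, e.y} 1 where
  notMem := by simp [e.x_notMem, e.y_notMem]
  hasPathWithin a ha b hb hab := by
    have hadj : G.Adj a b := by
      simp only [Finset.mem_insert, Finset.mem_singleton] at ha hb
      rcases ha with rfl | rfl <;> rcases hb with rfl | rfl
      exacts [absurd rfl hab, e.adj, e.adj.symm, absurd rfl hab]
    have hnotMem : ∀ z ∈ ({e.x, e.y} : Finset V), z ∉ C.verts := by simp [e.x_notMem, e.y_notMem]
    exact .of_adj hadj (hnotMem a ha) (hnotMem b hb)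
  add_two_le_len := C.three_le_len

/-- The cycle vertices adjacent to `x` or `y`. -/
noncomputable abbrev N : Finset V := C.contacts {e.x, e.y}

/-- The cycle vertices adjacent to both `x` and `y`. -/
noncomputable def M : Finset V := nbrsIn G C.verts e.x ∩ nbrsIn G C.verts e.y

theorem mem_N : u ∈ e.N ↔ u ∈ C.verts ∧ (G.Adj u e.x ∨ G.Adj u e.y) := by
  simp

theorem mem_M : u ∈ e.M ↔ u ∈ C.verts ∧ G.Adj u e.x ∧ G.Adj u e.y := by
  simp only [M, Finset.mem_inter, mem_nbrsIn, G.adj_comm u]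
  tauto

theorem N_subset : e.N ⊆ C.verts := Finset.filter_subset _ _

theorem M_subset_N : e.M ⊆ e.N := fun _ hu =>
  e.mem_N.2 ⟨(e.mem_M.1 hu).1, .inl (e.mem_M.1 hu).2.1⟩

theorem next_notMem_N (hu : u ∈ e.N) : C.next u ∉ e.N := by
  intro hnext
  obtain ⟨i, rfl⟩ := C.mem_verts.1 (e.N_subset hu)
  rw [next_vert] at hnext
  exact absurd (e.isWide.two_le_of_contacts one_pos hu hnext) (by norm_num)

theorem next_next_notMem_N (hu : u ∈ e.M) : C.next (C.next u) ∉ e.N := by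
  obtain ⟨huC, hux, huy⟩ := e.mem_M.1 hu
  have hswitch := e.isWide.mem_switches huC (by simp) (by simp) e.adj.ne hux huy
  obtain ⟨i, rfl⟩ := C.mem_verts.1 huC
  rw [next_vert, next_vert]
  exact (Finset.mem_filter.1 hswitch).2 i rfl 2 two_pos (by norm_num)

theorem not_adj_of_notMem_N (hw : w ∉ e.N) (hwx : w ≠ e.x) (hwy : w ≠ e.y) :
    ¬ G.Adj w e.x ∧ ¬ G.Adj w e.y := by
  by_cases hC : w ∈ C.verts
  · rwa [e.mem_N, and_iff_right hC, not_or] at hw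
  · exact ⟨fun h => hwy (e.eq_of_adj_adj _ _ _ hC e.x_notMem e.y_notMem h e.adj),
      fun h => hwx (e.eq_of_adj_adj _ _ _ hC e.y_notMem e.x_notMem h e.adj.symm)⟩

theorem hasPathWithin_three_of_adj (hu : u ∈ C.verts) (hv : v ∈ C.verts) (huv : u ≠ v)
    (h : G.Adj u e.x ∧ G.Adj v e.y ∨ G.Adj u e.y ∧ G.Adj v e.x) :
    HasPathWithin G {u, v, e.x, e.y} u v 3 := by
  have hout {z : V} (hz : z ∈ C.verts) : z ∉ ({e.x, e.y} : Set V) := by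
    rintro (rfl | rfl)
    exacts [e.x_notMem hz, e.y_notMem hz]
  have hxy : HasPathWithin G {e.x, e.y} e.x e.y 1 := .of_adj e.adj (by simp) (by simp)
  rcases h with ⟨hux, hvy⟩ | ⟨huy, hvx⟩
  · exact hxy.ear hux hvy.symm huv (hout hu) (hout hv)
  · exact hxy.symm.ear huy hvx.symm huv (hout hu) (hout hv)

theorem hasPathWithin_three (hu : u ∈ e.N) (hv : v ∈ e.N) (huv : u ≠ v) (hM : u ∈ e.M ∨ v ∈ e.M) :
    HasPathWithin G {u, v, e.x, e.y} u v 3 := by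
  refine e.hasPathWithin_three_of_adj (e.N_subset hu) (e.N_subset hv) huv ?_
  rw [e.mem_M, e.mem_M] at hM
  rw [e.mem_N] at hu hv
  tauto

theorem hasPathWithin_two (hu : u ∈ e.N) (hv : v ∈ e.N) (huv : u ≠ v) :
    HasPathWithin G {u, v, e.x, e.y} u v 2 := by
  by_cases h : G.Adj u e.x ∧ G.Adj v e.y ∨ G.Adj u e.y ∧ G.Adj v e.x
  · exact (e.hasPathWithin_three_of_adj (e.N_subset hu) (e.N_subset hv) huv h).mono subset_rfl
      (by norm_num)
  have hsingle {z : V} (hz : z ∉ C.verts) (huz : G.Adj u z) (hvz : G.Adj v z) :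
      HasPathWithin G {u, v, z} u v 2 :=
    HasPathWithin.ear (.refl rfl) huz hvz.symm huv
      (fun h => hz (Set.mem_singleton_iff.1 h ▸ e.N_subset hu))
      (fun h => hz (Set.mem_singleton_iff.1 h ▸ e.N_subset hv))
  rw [e.mem_N] at hu hv
  obtain ⟨hux, hvx⟩ | ⟨huy, hvy⟩ :
      (G.Adj u e.x ∧ G.Adj v e.x) ∨ (G.Adj u e.y ∧ G.Adj v e.y) := by tauto
  · exact (hsingle e.x_notMem hux hvx).mono (by grind) le_rfl
  · exact (hsingle e.y_notMem huy hvy).mono (by grind) le_rfl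

/-- The vertices one step after `N` or two steps after `M`. -/
noncomputable def bad : Finset V := e.N.image C.next ∪ e.M.image fun u => C.next (C.next u)

theorem mem_bad : v ∈ e.bad ↔ (∃ u ∈ e.N, C.next u = v) ∨ ∃ u ∈ e.M, C.next (C.next u) = v := by
  simp only [bad, Finset.mem_union, Finset.mem_image]

theorem bad_subset : e.bad ⊆ C.verts \ e.N := by
  intro v hv
  rw [Finset.mem_sdiff]
  rcases e.mem_bad.1 hv with ⟨u, hu, rfl⟩ | ⟨u, hu, rfl⟩
  · exact ⟨next_mem_verts _, e.next_notMem_N hu⟩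
  · exact ⟨next_mem_verts _, e.next_next_notMem_N hu⟩

theorem card_bad : e.bad.card = e.N.card + e.M.card := by
  have hinj : Set.InjOn C.next e.N := C.next_injOn.mono e.N_subset
  rw [bad, Finset.card_union_of_disjoint, Finset.card_image_of_injOn hinj,
    Finset.card_image_of_injOn]
  · intro u hu v hv h
    exact hinj (e.M_subset_N hu) (e.M_subset_N hv)
      (C.next_injOn (next_mem_verts _) (next_mem_verts _) h)
  · simp only [Finset.disjoint_left, Finset.mem_image]
    rintro _ ⟨u, hu, rfl⟩ ⟨v, hv, h⟩
    have hvu := C.next_injOn (next_mem_verts _) (e.N_subset hu) h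
    exact e.next_notMem_N (e.M_subset_N hv) (hvu ▸ hu)

/-- The vertices of the cycle that are neither in `N` nor bad. -/
noncomputable def good : Finset V := (C.verts \ e.N) \ e.bad

theorem mem_good : v ∈ e.good ↔ v ∈ C.verts ∧ v ∉ e.N ∧ v ∉ e.bad := by
  rw [good, Finset.mem_sdiff, Finset.mem_sdiff, and_assoc]

theorem card_add_card_good : 2 * e.N.card + e.M.card + e.good.card = C.len := by
  have hgood : e.good.card + e.bad.card = (C.verts \ e.N).card :=
    Finset.card_sdiff_add_card_eq_card e.bad_subset
  have hN := Finset.card_sdiff_add_card_eq_card e.N_subset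
  rw [card_verts] at hN
  rw [card_bad] at hgood
  omega

theorem add_le_of_crossing (hu : u ∈ e.N) (hv : v ∈ e.N) (huv : u ≠ v) (ha : a = 1 ∨ a = 2)
    (hb : b = 1 ∨ b = 2 ∧ C.next (C.next v) ∉ e.N) (h : HasPathWithin G {u, v, e.x, e.y} u v l)
    (h' : HasPathWithin G U' (C.next^[a] u) (C.next^[b] v) m)
    (hU' : ∀ z ∈ U', z = C.next^[a] u ∨ z = C.next^[b] v ∨ z ∉ C.verts ∧ z ≠ e.x ∧ z ≠ e.y) :
    l + m ≤ a + b := by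
  have hu' := e.next_notMem_N hu
  have hv' := e.next_notMem_N hv
  have hau : C.next^[a] u ∈ C.verts := iterate_next_mem_verts (e.N_subset hu)
  have hbv : C.next^[b] v ∈ C.verts := iterate_next_mem_verts (e.N_subset hv)
  refine C.add_le_of_crossing_next (e.N_subset hu) (e.N_subset hv) (by omega) (by omega) ?_ ?_ h h'
    ?_ ?_ ?_
  · intro j hj
    obtain rfl | rfl : j = 0 ∨ j = 1 := by omega
    exacts [huv, fun h : C.next u = v => hu' (h ▸ hv)]
  · intro j hj
    obtain rfl | rfl | ⟨rfl, h2⟩ : j = 0 ∨ j = 1 ∨ j = 2 ∧ C.next (C.next v) ∉ e.N := by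
      rcases hb with rfl | ⟨rfl, h2⟩ <;> grind
    exacts [huv.symm, fun h : C.next v = u => hv' (h ▸ hu),
      fun h : C.next (C.next v) = u => h2 (h ▸ hu)]
  · grind [e.x_notMem, e.y_notMem]
  · grind
  · grind [e.N_subset hu, e.N_subset hv, e.x_notMem, e.y_notMem]

theorem not_adj_next_next (hu : u ∈ e.N) (hv : v ∈ e.N) (huv : u ≠ v) :
    ¬ G.Adj (C.next u) (C.next v) := by
  intro hadj
  have hpath : HasPathWithin G {C.next u, C.next v} (C.next u) (C.next v) 1 :=
    .of_adj hadj (by simp) (by simp)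
  have := e.add_le_of_crossing (a := 1) (b := 1) hu hv huv (.inl rfl) (.inl rfl)
    (e.hasPathWithin_two hu hv huv) hpath (by simp)
  omega

theorem not_adj_next_next_next (hu : u ∈ e.N) (hv : v ∈ e.N) (huv : u ≠ v)
    (hM : u ∈ e.M ∨ v ∈ e.M) (hv2 : C.next (C.next v) ∉ e.N) :
    ¬ G.Adj (C.next u) (C.next (C.next v)) := by
  intro hadj
  have hpath : HasPathWithin G {C.next u, C.next (C.next v)} (C.next u) (C.next (C.next v)) 1 :=
    .of_adj hadj (by simp) (by simp)
  have := e.add_le_of_crossing (a := 1) (b := 2) hu hv huv (.inl rfl) (.inr ⟨rfl, hv2⟩)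
    (e.hasPathWithin_three hu hv huv hM) hpath (by simp)
  omega

theorem card_nbrsIn_bad_next_le_one (hu : u ∈ e.N) :
    (nbrsIn G e.bad (C.next u)).card ≤ 1 := by
  suffices nbrsIn G e.bad (C.next u) ⊆ {C.next (C.next u)} from
    (Finset.card_le_card this).trans (Finset.card_singleton _).le
  intro b hb
  rw [mem_nbrsIn] at hb
  rw [Finset.mem_singleton]
  rcases e.mem_bad.1 hb.1 with ⟨v, hv, rfl⟩ | ⟨v, hv, rfl⟩ <;> by_cases huv : u = v
  · exact (G.irrefl (huv ▸ hb.2)).elim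
  · exact absurd hb.2 (e.not_adj_next_next hu hv huv)
  · rw [huv]
  · exact absurd hb.2 (e.not_adj_next_next_next hu (e.M_subset_N hv) huv (.inr hv)
      (e.next_next_notMem_N hv))

variable [Fintype V]

/-- The vertices outside the cycle other than `x` and `y`. -/
noncomputable def others : Finset V := {v | v ∉ C.verts ∧ v ≠ e.x ∧ v ≠ e.y}

@[simp]
theorem mem_others : v ∈ e.others ↔ v ∉ C.verts ∧ v ≠ e.x ∧ v ≠ e.y := by
  simp [others]

theorem not_adj_iterate_next_of_mem_others (hz : z ∈ e.others) (hu : u ∈ e.N) (hv : v ∈ e.N)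
    (huv : u ≠ v) (ha : a = 1 ∨ a = 2) (hb : b = 1 ∨ b = 2 ∧ C.next (C.next v) ∉ e.N)
    (hne : C.next^[a] u ≠ C.next^[b] v) (h : HasPathWithin G {u, v, e.x, e.y} u v l)
    (hl : a + b < l + 2) (hzu : G.Adj z (C.next^[a] u)) : ¬ G.Adj z (C.next^[b] v) := by
  intro hzv
  have hz_ne {w : V} (hw : w ∈ C.verts) : w ≠ z := fun h => (e.mem_others.1 hz).1 (h ▸ hw)
  have hpath : HasPathWithin G {C.next^[a] u, C.next^[b] v, z} (C.next^[a] u) (C.next^[b] v) 2 :=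
    HasPathWithin.ear (.refl rfl) hzu.symm hzv hne
      (hz_ne (iterate_next_mem_verts (e.N_subset hu)))
      (hz_ne (iterate_next_mem_verts (e.N_subset hv)))
  have := e.add_le_of_crossing hu hv huv ha hb h hpath (by grind [mem_others])
  omega

theorem card_nbrsIn_bad_le_one_of_mem_others (hz : z ∈ e.others) :
    (nbrsIn G e.bad z).card ≤ 1 := by
  rw [Finset.card_le_one]
  intro p hp q hq
  rw [mem_nbrsIn] at hp hq
  have hzC := (e.mem_others.1 hz).1
  by_contra hpq
  rcases e.mem_bad.1 hp.1 with ⟨u, hu, rfl⟩ | ⟨u, hu, rfl⟩ <;>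
    rcases e.mem_bad.1 hq.1 with ⟨v, hv, rfl⟩ | ⟨v, hv, rfl⟩ <;> by_cases huv : u = v
  · exact hpq (by rw [huv])
  · exact e.not_adj_iterate_next_of_mem_others (a := 1) (b := 1) hz hu hv huv (.inl rfl) (.inl rfl)
      hpq (e.hasPathWithin_two hu hv huv) (by norm_num) hp.2 hq.2
  · subst huv
    exact not_adj_next_of_adj hzC (next_mem_verts u) hp.2 hq.2
  · exact e.not_adj_iterate_next_of_mem_others (a := 1) (b := 2) hz hu (e.M_subset_N hv) huv
      (.inl rfl) (.inr ⟨rfl, e.next_next_notMem_N hv⟩) hpq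
      (e.hasPathWithin_three hu (e.M_subset_N hv) huv (.inr hv)) (by norm_num) hp.2 hq.2
  · subst huv
    exact not_adj_next_of_adj hzC (next_mem_verts u) hq.2 hp.2
  · exact e.not_adj_iterate_next_of_mem_others (a := 1) (b := 2) hz hv (e.M_subset_N hu)
      (Ne.symm huv) (.inl rfl) (.inr ⟨rfl, e.next_next_notMem_N hu⟩) (Ne.symm hpq)
      (e.hasPathWithin_three hv (e.M_subset_N hu) (Ne.symm huv) (.inr hu)) (by norm_num) hq.2 hp.2
  · exact hpq (by rw [huv])
  · exact e.not_adj_iterate_next_of_mem_others (a := 2) (b := 2) hz (e.M_subset_N hu)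
      (e.M_subset_N hv) huv (.inr rfl) (.inr ⟨rfl, e.next_next_notMem_N hv⟩) hpq
      (e.hasPathWithin_three (e.M_subset_N hu) (e.M_subset_N hv) huv (.inl hu)) (by norm_num)
      hp.2 hq.2

theorem eq_of_adj_next (hu : u ∈ e.N) (hv : v ∈ e.N) (hz : z ∈ e.others)
    (hzu : G.Adj z (C.next u)) (hzv : G.Adj z (C.next v)) : u = v := by
  have hcard := Finset.card_le_one.1 (e.card_nbrsIn_bad_le_one_of_mem_others hz)
  have hbad {w : V} (hw : w ∈ e.N) (hzw : G.Adj z (C.next w)) :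
      C.next w ∈ nbrsIn G e.bad z := mem_nbrsIn.2 ⟨e.mem_bad.2 (.inl ⟨w, hw, rfl⟩), hzw⟩
  exact C.next_injOn (e.N_subset hu) (e.N_subset hv) (hcard _ (hbad hu hzu) _ (hbad hv hzv))

theorem card_nbrsIn_others_le_one (hz : z ∈ e.others) : (nbrsIn G e.others z).card ≤ 1 := by
  rw [Finset.card_le_one]
  intro a ha b hb
  simp only [mem_nbrsIn, mem_others] at ha hb hz
  exact e.eq_of_adj_adj a z b ha.1.1 hz.1 hb.1.1 ha.2.symm hb.2

/-- Vertices outside `N` that have at most one bad neighbour each; a probe on a given side of a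
separation yields a vertex of small degree there. -/
noncomputable def probes : Finset V := e.others ∪ e.N.image C.next

theorem mem_probes : w ∈ e.probes ↔ w ∈ e.others ∨ ∃ u ∈ e.N, C.next u = w := by
  rw [probes, Finset.mem_union, Finset.mem_image]

theorem card_nbrsIn_bad_le_one (hw : w ∈ e.probes) : (nbrsIn G e.bad w).card ≤ 1 := by
  rcases e.mem_probes.1 hw with hw | ⟨u, hu, rfl⟩
  · exact e.card_nbrsIn_bad_le_one_of_mem_others hw
  · exact e.card_nbrsIn_bad_next_le_one hu

theorem notMem_N_of_mem_probes (hw : w ∈ e.probes) : w ∉ e.N ∧ w ≠ e.x ∧ w ≠ e.y := by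
  rcases e.mem_probes.1 hw with hw | ⟨u, hu, rfl⟩
  · rw [mem_others] at hw
    exact ⟨fun h => hw.1 (e.N_subset h), hw.2⟩
  · exact ⟨e.next_notMem_N hu, fun h => e.x_notMem (h ▸ next_mem_verts _),
      fun h => e.y_notMem (h ▸ next_mem_verts _)⟩

end OuterEdge

end LongestCycle

namespace LongestCycle.OuterEdge

variable {C : LongestCycle G} (e : C.OuterEdge) {P Q S : Finset V} {u w z b p : V}

theorem notMem_bad_next (hb : b ∈ e.bad) (hu : u ∈ e.M) (hbu : C.next (C.next u) = b) :
    C.next b ∉ e.bad := by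
  have hbC := Finset.mem_sdiff.1 (e.bad_subset hb)
  intro hbad
  rcases e.mem_bad.1 hbad with ⟨v, hv, hvb⟩ | ⟨v, hv, hvb⟩
  · exact hbC.2 (C.next_injOn (e.N_subset hv) hbC.1 hvb ▸ hv)
  · have hv2 := C.next_injOn (next_mem_verts _) hbC.1 hvb
    have hvu : v = C.next u := C.next_injOn (e.N_subset (e.M_subset_N hv)) (next_mem_verts _)
      (hv2.trans hbu.symm)
    exact e.next_notMem_N (e.M_subset_N hu) (hvu ▸ e.M_subset_N hv)

theorem notMem_of_mem_N (hs : IsSeparation G P Q S) (hx : e.x ∈ Q) (hy : e.y ∈ Q)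
    (hu : u ∈ e.N) : u ∉ P := fun huP =>
  (e.mem_N.1 hu).2.elim (hs.not_adj u huP e.x hx) (hs.not_adj u huP e.y hy)

variable [Fintype V]

theorem card_nbrsIn_univ_le (hs : IsSeparation G P Q S) (hwP : w ∈ P) (hwN : w ∉ e.N)
    (hwx : w ≠ e.x) (hwy : w ≠ e.y) :
    (nbrsIn G Finset.univ w).card ≤ (nbrsIn G e.good w).card + (nbrsIn G e.bad w).card +
      (e.N ∩ P).card + (nbrsIn G (e.N ∩ S) w).card + (nbrsIn G e.others w).card := by
  have hsub : nbrsIn G Finset.univ w ⊆ nbrsIn G e.good w ∪ nbrsIn G e.bad w ∪ e.N ∩ P ∪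
      nbrsIn G (e.N ∩ S) w ∪ nbrsIn G e.others w := by
    intro v hv
    have hwv := (mem_nbrsIn.1 hv).2
    have hxy := e.not_adj_of_notMem_N hwN hwx hwy
    have hvx : v ≠ e.x := fun h => hxy.1 (h ▸ hwv)
    have hvy : v ≠ e.y := fun h => hxy.2 (h ▸ hwv)
    have := hs.mem_or_mem_of_adj hwP hwv
    simp only [Finset.mem_union, mem_nbrsIn, Finset.mem_inter, mem_good, mem_others]
    tauto
  have := Finset.card_le_card hsub
  grind [Finset.card_union_le]

theorem card_nbrsIn_univ_le_of_mem_probes (hs : IsSeparation G P Q S) (hwP : w ∈ P)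
    (hw : w ∈ e.probes) :
    (nbrsIn G Finset.univ w).card ≤ (nbrsIn G e.good w).card + 1 + (e.N ∩ P).card +
      (e.N ∩ S).card + (nbrsIn G e.others w).card := by
  obtain ⟨hwN, hwx, hwy⟩ := e.notMem_N_of_mem_probes hw
  have hdeg := e.card_nbrsIn_univ_le hs hwP hwN hwx hwy
  have hbad := e.card_nbrsIn_bad_le_one hw
  have hNS : (nbrsIn G (e.N ∩ S) w).card ≤ (e.N ∩ S).card := Finset.card_filter_le _ _
  omega

theorem sum_card_inter_le (S : Finset V) :
    (e.N ∩ S).card + (e.good ∩ S).card + (e.others ∩ S).card +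
      (({e.x, e.y} : Finset V) ∩ S).card ≤ S.card := by
  have hx := e.x_notMem
  have hy := e.y_notMem
  have hN (v : V) : v ∈ e.N → v ∈ C.verts := fun h => e.N_subset h
  rw [← Finset.card_union_of_disjoint, ← Finset.card_union_of_disjoint,
    ← Finset.card_union_of_disjoint]
  · exact Finset.card_le_card (by grind)
  all_goals
    rw [Finset.disjoint_left]
    grind [mem_good, mem_others]

theorem next_mem_of_disjoint_probes (hs : IsSeparation G P Q S) (hP : Disjoint e.probes P)
    (hu : u ∈ e.N) (hu2 : C.next (C.next u) ∈ P) : C.next u ∈ S :=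
  (hs.mem_or_mem_of_adj hu2 (adj_next (next_mem_verts u)).symm).resolve_left
    (Finset.disjoint_left.1 hP (e.mem_probes.2 (.inr ⟨u, hu, rfl⟩)))

theorem card_nbrsIn_bad_add_card_nbrsIn_le (hs : IsSeparation G P Q S)
    (hP : Disjoint e.probes P) (hu : u ∈ e.M) :
    (nbrsIn G (e.bad ∩ P) (C.next (C.next u))).card +
      (nbrsIn G (S \ {e.x, e.y}) (C.next (C.next u))).card ≤ (S \ {e.x, e.y}).card := by
  -- A bad neighbour of `p` in `P` is `next (next v)` for some `v ∈ M`; then `next v` is a vertex of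
  -- `S` that is not adjacent to `p`.
  set p := C.next (C.next u)
  let A : Finset V := {v ∈ e.M | C.next (C.next v) ∈ P ∧ G.Adj p (C.next (C.next v))}
  have mem_A {v : V} :
      v ∈ A ↔ v ∈ e.M ∧ C.next (C.next v) ∈ P ∧ G.Adj p (C.next (C.next v)) := Finset.mem_filter
  have hbad : nbrsIn G (e.bad ∩ P) p ⊆ (A.image C.next).image C.next := by
    intro b hb
    simp only [mem_nbrsIn, Finset.mem_inter] at hb
    rcases e.mem_bad.1 hb.1.1 with ⟨v, hv, rfl⟩ | ⟨v, hv, rfl⟩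
    · exact absurd hb.1.2 (Finset.disjoint_left.1 hP (e.mem_probes.2 (.inr ⟨v, hv, rfl⟩)))
    · exact Finset.mem_image_of_mem _ (Finset.mem_image_of_mem _ (mem_A.2 ⟨hv, hb.1.2, hb.2⟩))
  refine (Nat.add_le_add_right ((Finset.card_le_card hbad).trans Finset.card_image_le) _).trans ?_
  rw [← Finset.card_union_of_disjoint]
  · refine Finset.card_le_card (Finset.union_subset (fun w hw => ?_) (Finset.filter_subset _ _))
    obtain ⟨v, hv, rfl⟩ := Finset.mem_image.1 hw
    obtain ⟨hvM, hv2, -⟩ := mem_A.1 hv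
    have hnext : C.next v ∈ C.verts := next_mem_verts v
    have := e.next_mem_of_disjoint_probes hs hP (e.M_subset_N hvM) hv2
    grind [e.x_notMem, e.y_notMem]
  · rw [Finset.disjoint_left]
    rintro w hw hpw
    obtain ⟨v, hv, rfl⟩ := Finset.mem_image.1 hw
    obtain ⟨hvM, -, hpv⟩ := mem_A.1 hv
    have hvu : v ≠ u := fun h => hpv.ne (h ▸ rfl)
    exact e.not_adj_next_next_next (e.M_subset_N hvM) (e.M_subset_N hu) hvu (.inl hvM)
      (e.next_next_notMem_N hu) (mem_nbrsIn.1 hpw).2.symm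

theorem card_nbrsIn_univ_le_of_disjoint_probes (hs : IsSeparation G P Q S)
    (hP : Disjoint e.probes P) (hpP : p ∈ P) (hpC : p ∈ C.verts) (hpN : p ∉ e.N) :
    (nbrsIn G Finset.univ p).card ≤ (e.good ∩ P).card + (e.N ∩ P).card +
      ((nbrsIn G (e.bad ∩ P) p).card + (nbrsIn G (S \ {e.x, e.y}) p).card) := by
  have hsub : nbrsIn G Finset.univ p ⊆ e.good ∩ P ∪ e.N ∩ P ∪
      (nbrsIn G (e.bad ∩ P) p ∪ nbrsIn G (S \ {e.x, e.y}) p) := by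
    intro v hv
    have hpv := (mem_nbrsIn.1 hv).2
    have hpx : p ≠ e.x := fun h => e.x_notMem (h ▸ hpC)
    have hpy : p ≠ e.y := fun h => e.y_notMem (h ▸ hpC)
    have hxy := e.not_adj_of_notMem_N hpN hpx hpy
    have hvx : v ≠ e.x := fun h => hxy.1 (h ▸ hpv)
    have hvy : v ≠ e.y := fun h => hxy.2 (h ▸ hpv)
    have hvPS := hs.mem_or_mem_of_adj hpP hpv
    have hothers : v ∈ P → v ∈ C.verts := fun hvP => by
      by_contra hvC
      exact Finset.disjoint_left.1 hP
        (e.mem_probes.2 (.inl (e.mem_others.2 ⟨hvC, hvx, hvy⟩))) hvP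
    simp only [Finset.mem_union, mem_nbrsIn, Finset.mem_inter, mem_good, Finset.mem_sdiff,
      Finset.mem_insert, Finset.mem_singleton]
    tauto
  have := Finset.card_le_card hsub
  grind [Finset.card_union_le]

theorem exists_card_nbrsIn_univ_le_of_notMem_N (hs : IsSeparation G P Q S)
    (hP : Disjoint e.probes P) (hpP : p ∈ P) (hpC : p ∈ C.verts) (hpN : p ∉ e.N) :
    ∃ p' ∈ P, (nbrsIn G Finset.univ p').card ≤
      (e.good ∩ P).card + (e.N ∩ P).card + (S \ {e.x, e.y}).card := by
  by_cases hM : ∃ u ∈ e.M, C.next (C.next u) ∈ P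
  · obtain ⟨u, hu, hu2⟩ := hM
    have := e.card_nbrsIn_univ_le_of_disjoint_probes hs hP hu2 (next_mem_verts _)
      (e.next_next_notMem_N hu)
    have := e.card_nbrsIn_bad_add_card_nbrsIn_le hs hP hu
    exact ⟨_, hu2, by omega⟩
  · have hdeg := e.card_nbrsIn_univ_le_of_disjoint_probes hs hP hpP hpC hpN
    have hbad : nbrsIn G (e.bad ∩ P) p = ∅ := by
      refine Finset.eq_empty_of_forall_notMem fun v hv => ?_
      simp only [mem_nbrsIn, Finset.mem_inter] at hv
      rcases e.mem_bad.1 hv.1.1 with ⟨u, hu, rfl⟩ | ⟨u, hu, rfl⟩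
      · exact Finset.disjoint_left.1 hP (e.mem_probes.2 (.inr ⟨u, hu, rfl⟩)) hv.1.2
      · exact hM ⟨u, hu, hv.1.2⟩
    have hS : (nbrsIn G (S \ {e.x, e.y}) p).card ≤ (S \ {e.x, e.y}).card :=
      Finset.card_filter_le _ _
    rw [hbad, Finset.card_empty] at hdeg
    exact ⟨p, hpP, by omega⟩

theorem exists_missed_of_adj_bad (hs : IsSeparation G P Q S) (hx : e.x ∈ Q) (hy : e.y ∈ Q)
    (hz : z ∈ e.others) (hzP : z ∈ P) (hb : b ∈ e.bad) (hzb : G.Adj z b) :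
    (∃ w ∈ e.good, ¬ G.Adj z w) ∨ ∃ w ∈ S, ¬ (w ∈ e.N ∧ G.Adj z w) := by
  have hNP {u : V} (hu : u ∈ e.N) : u ∉ P := e.notMem_of_mem_N hs hx hy hu
  have hzC := (e.mem_others.1 hz).1
  obtain ⟨hbC, hbN⟩ := Finset.mem_sdiff.1 (e.bad_subset hb)
  rcases (hs.mem_or_mem_of_adj hzP hzb).symm with hbS | hbP
  · exact .inr ⟨b, hbS, fun h => hbN h.1⟩
  rcases e.mem_bad.1 hb with ⟨u, hu, rfl⟩ | ⟨u, hu, hub⟩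
  · have huS : u ∈ S :=
      (hs.mem_or_mem_of_adj hbP (adj_next (e.N_subset hu)).symm).resolve_left (hNP hu)
    exact .inr ⟨u, huS, fun h => not_adj_next_of_adj hzC (e.N_subset hu) h.2 hzb⟩
  · have hzb' : ¬ G.Adj z (C.next b) := not_adj_next_of_adj hzC hbC hzb
    rcases hs.mem_or_mem_of_adj hbP (adj_next hbC) with hbP' | hbS'
    · exact .inl ⟨C.next b, e.mem_good.2
        ⟨next_mem_verts _, fun h => hNP h hbP', e.notMem_bad_next hb hu hub⟩, hzb'⟩
    · exact .inr ⟨C.next b, hbS', fun h => hzb' h.2⟩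

theorem card_nbrsIn_univ_le_of_mem_others (hs : IsSeparation G P Q S) (hx : e.x ∈ Q)
    (hy : e.y ∈ Q) (hz : z ∈ e.others) (hzP : z ∈ P) :
    (nbrsIn G Finset.univ z).card ≤ e.good.card + S.card + 1 := by
  obtain ⟨hzN, hzx, hzy⟩ := e.notMem_N_of_mem_probes (e.mem_probes.2 (.inl hz))
  have hdeg := e.card_nbrsIn_univ_le hs hzP hzN hzx hzy
  have hNP : e.N ∩ P = ∅ := Finset.eq_empty_of_forall_notMem fun u hu =>
    e.notMem_of_mem_N hs hx hy (Finset.mem_inter.1 hu).1 (Finset.mem_inter.1 hu).2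
  rw [hNP, Finset.card_empty] at hdeg
  have hothers := e.card_nbrsIn_others_le_one hz
  have hbad := e.card_nbrsIn_bad_le_one_of_mem_others hz
  have hgood_sub : nbrsIn G e.good z ⊆ e.good := Finset.filter_subset _ _
  have hNS_sub : nbrsIn G (e.N ∩ S) z ⊆ S :=
    (Finset.filter_subset _ _).trans Finset.inter_subset_right
  have hgood := Finset.card_le_card hgood_sub
  have hNS := Finset.card_le_card hNS_sub
  rcases (nbrsIn G e.bad z).eq_empty_or_nonempty with hempty | ⟨b, hb⟩
  · rw [hempty, Finset.card_empty] at hdeg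
    omega
  rw [mem_nbrsIn] at hb
  rcases e.exists_missed_of_adj_bad hs hx hy hz hzP hb.1 hb.2 with ⟨w, hw, hzw⟩ | ⟨w, hw, hzw⟩
  · have : (nbrsIn G e.good z).card < e.good.card := Finset.card_lt_card <|
      (Finset.ssubset_iff_of_subset hgood_sub).2 ⟨w, hw, fun h => hzw (mem_nbrsIn.1 h).2⟩
    omega
  · have : (nbrsIn G (e.N ∩ S) z).card < S.card := Finset.card_lt_card <|
      (Finset.ssubset_iff_of_subset hNS_sub).2 ⟨w, hw, fun h => hzw <| by
        rw [mem_nbrsIn, Finset.mem_inter] at h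
        exact ⟨h.1.1, h.2⟩⟩
    omega

theorem exists_card_nbrsIn_univ_le_of_mem_right (hs : IsSeparation G P Q S) (hx : e.x ∈ Q)
    (hy : e.y ∈ Q) : ∃ p, (nbrsIn G Finset.univ p).card ≤ e.good.card + S.card + 1 := by
  have hNP {u : V} (hu : u ∈ e.N) : u ∉ P := e.notMem_of_mem_N hs hx hy hu
  have hNP_card : (e.N ∩ P).card = 0 := Finset.card_eq_zero.2 <|
    Finset.eq_empty_of_forall_notMem fun u hu =>
      hNP (Finset.mem_inter.1 hu).1 (Finset.mem_inter.1 hu).2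
  by_cases hothers : ∃ z ∈ e.others, z ∈ P
  · obtain ⟨z, hz, hzP⟩ := hothers
    exact ⟨z, e.card_nbrsIn_univ_le_of_mem_others hs hx hy hz hzP⟩
  push Not at hothers
  by_cases hprobes : ∃ w ∈ e.probes, w ∈ P
  · obtain ⟨w, hw, hwP⟩ := hprobes
    have hdeg := e.card_nbrsIn_univ_le_of_mem_probes hs hwP hw
    have hgood : (nbrsIn G e.good w).card ≤ e.good.card := Finset.card_filter_le _ _
    have hothersS : (nbrsIn G e.others w).card ≤ (e.others ∩ S).card :=
      Finset.card_le_card fun v hv => by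
        rw [mem_nbrsIn] at hv
        exact Finset.mem_inter.2
          ⟨hv.1, (hs.mem_or_mem_of_adj hwP hv.2).resolve_left (hothers v hv.1)⟩
    have hS := e.sum_card_inter_le S
    exact ⟨w, by omega⟩
  · push Not at hprobes
    obtain ⟨p, hpP⟩ := hs.nonempty_left
    have hPQ := Finset.disjoint_left.1 hs.disjoint
    have hpC : p ∈ C.verts := by
      by_contra hpC
      exact hothers p (e.mem_others.2 ⟨hpC, fun h => hPQ hpP (h ▸ hx), fun h => hPQ hpP (h ▸ hy)⟩)
        hpP
    obtain ⟨p', -, hp'⟩ := e.exists_card_nbrsIn_univ_le_of_notMem_N hs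
      (Finset.disjoint_left.2 hprobes) hpP hpC fun h => hNP h hpP
    have hgood : (e.good ∩ P).card ≤ e.good.card := Finset.card_le_card Finset.inter_subset_left
    have hS : (S \ {e.x, e.y}).card ≤ S.card := Finset.card_le_card Finset.sdiff_subset
    exact ⟨p', by omega⟩

end LongestCycle.OuterEdge

namespace LongestCycle.OuterEdge

variable [Fintype V] {C : LongestCycle G} (e : C.OuterEdge) {P Q S : Finset V} {u w p q : V}

theorem exists_next_notMem (hS : S.card < e.N.card) :
    ∃ u ∈ e.N, C.next u ∉ S ∧ ∀ z ∈ e.others, z ∈ S → ¬ G.Adj z (C.next u) := by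
  by_contra! hcon
  refine hS.not_ge (Finset.card_le_card_of_forall_subsingleton
    (fun u z => z = C.next u ∨ z ∈ e.others ∧ G.Adj z (C.next u)) (fun u hu => ?_) fun z _ => ?_)
  · by_cases huS : C.next u ∈ S
    · exact ⟨C.next u, huS, .inl rfl⟩
    · obtain ⟨z, hz, hzS, hzu⟩ := hcon u hu huS
      exact ⟨z, hzS, .inr ⟨hz, hzu⟩⟩
  · have hnext (w : V) : C.next w ∉ e.others := fun h => (e.mem_others.1 h).1 (next_mem_verts w)
    rintro u ⟨hu, rfl | ⟨hz, hzu⟩⟩ v ⟨hv, hvz | ⟨hz', hzv⟩⟩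
    · exact C.next_injOn (e.N_subset hu) (e.N_subset hv) hvz
    · exact absurd hz' (hnext u)
    · exact absurd (hvz ▸ hz) (hnext v)
    · exact e.eq_of_adj_next hu hv hz hzu hzv

theorem exists_card_nbrsIn_univ_le_of_next_mem (hs : IsSeparation G P Q S) (hu : u ∈ e.N)
    (huP : C.next u ∈ P) (huS : ∀ z ∈ e.others, z ∈ S → ¬ G.Adj z (C.next u)) :
    ∃ p ∈ P, (nbrsIn G Finset.univ p).card ≤
      (nbrsIn G e.good p).card + (e.N ∩ P).card + (e.N ∩ S).card + 2 := by
  by_cases hothers : ∃ z ∈ e.others, z ∈ P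
  · obtain ⟨z, hz, hzP⟩ := hothers
    have := e.card_nbrsIn_univ_le_of_mem_probes hs hzP (e.mem_probes.2 (.inl hz))
    have := e.card_nbrsIn_others_le_one hz
    exact ⟨z, hzP, by omega⟩
  · push Not at hothers
    have hdeg := e.card_nbrsIn_univ_le_of_mem_probes hs huP (e.mem_probes.2 (.inr ⟨u, hu, rfl⟩))
    have hempty : nbrsIn G e.others (C.next u) = ∅ := by
      refine Finset.eq_empty_of_forall_notMem fun z hz => ?_
      rw [mem_nbrsIn] at hz
      exact huS z hz.1 ((hs.mem_or_mem_of_adj huP hz.2).resolve_left (hothers z hz.1)) hz.2.symm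
    rw [hempty, Finset.card_empty] at hdeg
    exact ⟨_, huP, by omega⟩

theorem exists_mem_probes_nbrsIn_others_subset (hs : IsSeparation G P Q S)
    (hcover : ∀ a b, a ∉ C.verts → b ∉ C.verts → G.Adj a b → a ∈ S ∨ b ∈ S) (hw : w ∈ e.probes)
    (hwP : w ∈ P) : ∃ p ∈ e.probes, p ∈ P ∧ nbrsIn G e.others p ⊆ e.others ∩ S := by
  by_cases hothers : ∃ z ∈ e.others, z ∈ P
  · obtain ⟨z, hz, hzP⟩ := hothers
    refine ⟨z, e.mem_probes.2 (.inl hz), hzP, fun v hv => ?_⟩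
    rw [mem_nbrsIn] at hv
    exact Finset.mem_inter.2 ⟨hv.1, (hcover z v (e.mem_others.1 hz).1 (e.mem_others.1 hv.1).1
      hv.2).resolve_left (Finset.disjoint_left.1 hs.disjoint_left hzP)⟩
  · push Not at hothers
    refine ⟨w, hw, hwP, fun v hv => ?_⟩
    rw [mem_nbrsIn] at hv
    exact Finset.mem_inter.2 ⟨hv.1, (hs.mem_or_mem_of_adj hwP hv.2).resolve_left (hothers v hv.1)⟩

theorem card_nbrsIn_univ_le_of_subset (hs : IsSeparation G P Q S) (hpP : p ∈ P) (hpN : p ∈ e.N)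
    (hP : P ⊆ e.N ∪ {e.x, e.y}) (hxy : (({e.x, e.y} : Finset V) ∩ S).Nonempty) :
    (nbrsIn G Finset.univ p).card ≤ (e.N ∩ P).card + S.card := by
  have hsub : nbrsIn G Finset.univ p ⊆ (e.N ∩ P).erase p ∪ {e.x, e.y} ∩ P ∪ S := by
    intro v hv
    have hpv := (mem_nbrsIn.1 hv).2
    have := hpv.ne
    have := hs.mem_or_mem_of_adj hpP hpv
    have := @hP v
    grind
  have hle := Finset.card_le_card hsub
  have h₁ := Finset.card_union_le ((e.N ∩ P).erase p ∪ {e.x, e.y} ∩ P) S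
  have h₂ := Finset.card_union_le ((e.N ∩ P).erase p) ({e.x, e.y} ∩ P)
  have herase : ((e.N ∩ P).erase p).card + 1 = (e.N ∩ P).card :=
    Finset.card_erase_add_one (Finset.mem_inter.2 ⟨hpN, hpP⟩)
  have hsplit := hs.card_inter_add_card_inter_add_card_inter {e.x, e.y}
  have htwo : ({e.x, e.y} : Finset V).card ≤ 2 := Finset.card_le_two
  have := hxy.card_pos
  omega

theorem exists_card_nbrsIn_univ_le_of_disjoint_probes (hs : IsSeparation G P Q S)
    (hP : Disjoint e.probes P) (hM : S.card < e.M.card)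
    (hxy : (({e.x, e.y} : Finset V) ∩ S).Nonempty) :
    ∃ p ∈ P, (nbrsIn G Finset.univ p).card ≤ (e.good ∩ P).card + (e.N ∩ P).card + S.card := by
  by_cases hinner : ∃ p ∈ P, p ∈ C.verts ∧ p ∉ e.N
  · obtain ⟨p, hpP, hpC, hpN⟩ := hinner
    obtain ⟨p', hp'P, hp'⟩ := e.exists_card_nbrsIn_univ_le_of_notMem_N hs hP hpP hpC hpN
    have : (S \ {e.x, e.y}).card ≤ S.card := Finset.card_le_card Finset.sdiff_subset
    exact ⟨p', hp'P, by omega⟩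
  push Not at hinner
  have hsub : P ⊆ e.N ∪ {e.x, e.y} := by
    intro p hpP
    have := hinner p hpP
    have := fun h => Finset.disjoint_left.1 hP (e.mem_probes.2 (.inl h)) hpP
    grind [mem_others]
  by_cases hN : ∃ p ∈ P, p ∈ e.N
  · obtain ⟨p, hpP, hpN⟩ := hN
    have := e.card_nbrsIn_univ_le_of_subset hs hpP hpN hsub hxy
    exact ⟨p, hpP, by omega⟩
  push Not at hN
  obtain ⟨p, hpP⟩ := hs.nonempty_left
  have hMS : e.M ⊆ S := by
    intro u hu
    obtain ⟨-, hux, huy⟩ := e.mem_M.1 hu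
    have hpu : G.Adj p u := by
      have hpxy := hsub hpP
      simp only [Finset.mem_union, hN p hpP, Finset.mem_insert, Finset.mem_singleton,
        false_or] at hpxy
      rcases hpxy with rfl | rfl
      exacts [hux.symm, huy.symm]
    exact (hs.mem_or_mem_of_adj hpP hpu).resolve_left fun h => hN u h (e.M_subset_N hu)
  exact absurd (Finset.card_le_card hMS) hM.not_ge

theorem exists_card_nbrsIn_add_le_of_next_mem (hs : IsSeparation G P Q S) (hM : S.card < e.M.card)
    (hcover : ∀ a b, a ∉ C.verts → b ∉ C.verts → G.Adj a b → a ∈ S ∨ b ∈ S) (hu : u ∈ e.N)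
    (huQ : C.next u ∈ Q) (huS : ∀ z ∈ e.others, z ∈ S → ¬ G.Adj z (C.next u)) :
    ∃ p q, (nbrsIn G Finset.univ p).card + (nbrsIn G Finset.univ q).card ≤
      e.good.card + e.N.card + S.card + 2 := by
  obtain ⟨q, hqQ, hq⟩ := e.exists_card_nbrsIn_univ_le_of_next_mem hs.symm hu huQ huS
  have hN := hs.card_inter_add_card_inter_add_card_inter e.N
  have hxy : (({e.x, e.y} : Finset V) ∩ S).Nonempty := by
    rcases hcover _ _ e.x_notMem e.y_notMem e.adj with h | h
    exacts [⟨e.x, by simp [h]⟩, ⟨e.y, by simp [h]⟩]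
  by_cases hprobes : ∃ w ∈ e.probes, w ∈ P
  · obtain ⟨w, hw, hwP⟩ := hprobes
    obtain ⟨p, hp, hpP, hothers⟩ := e.exists_mem_probes_nbrsIn_others_subset hs hcover hw hwP
    have hdeg := e.card_nbrsIn_univ_le_of_mem_probes hs hpP hp
    have hgood := hs.card_nbrsIn_add_card_nbrsIn_le (U := e.good) hpP hqQ
    have hS := e.sum_card_inter_le S
    have := Finset.card_le_card hothers
    have := hxy.card_pos
    exact ⟨p, q, by omega⟩
  · push Not at hprobes
    obtain ⟨p, -, hp⟩ := e.exists_card_nbrsIn_univ_le_of_disjoint_probes hs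
      (Finset.disjoint_left.2 hprobes) hM hxy
    have hgood := hs.card_nbrsIn_add_card_inter_le (U := e.good) hqQ
    exact ⟨p, q, by omega⟩

theorem exists_card_nbrsIn_add_le (hs : IsSeparation G P Q S) (hM : S.card < e.M.card)
    (hcover : ∀ a b, a ∉ C.verts → b ∉ C.verts → G.Adj a b → a ∈ S ∨ b ∈ S) :
    ∃ p q, (nbrsIn G Finset.univ p).card + (nbrsIn G Finset.univ q).card ≤
      e.good.card + e.N.card + S.card + 2 := by
  obtain ⟨u, hu, hunS, huS⟩ :=
    e.exists_next_notMem (hM.trans_le (Finset.card_le_card e.M_subset_N))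
  rcases hs.mem_or_mem_or_mem (C.next u) with huP | huQ | huS'
  · exact e.exists_card_nbrsIn_add_le_of_next_mem hs.symm hM hcover hu huP huS
  · exact e.exists_card_nbrsIn_add_le_of_next_mem hs hM hcover hu huQ huS
  · exact absurd huS' hunS

theorem two_mul_le {δ : ℕ} (hδ : ∀ v, δ ≤ (nbrsIn G Finset.univ v).card) :
    2 * δ ≤ e.N.card + e.M.card + 2 := by
  have hdeg {a b : V} (ha : a ∉ C.verts) (hb : b ∉ C.verts) (hab : G.Adj a b) :
      δ ≤ (nbrsIn G C.verts a).card + 1 := by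
    refine (hδ a).trans ((Finset.card_le_card fun v hv => ?_).trans (Finset.card_insert_le b _))
    have hav := (mem_nbrsIn.1 hv).2
    rw [Finset.mem_insert, mem_nbrsIn]
    by_cases hv : v ∈ C.verts
    · exact .inr ⟨hv, hav⟩
    · exact .inl (e.eq_of_adj_adj v a b hv ha hb hav.symm hab)
  have hx := hdeg e.x_notMem e.y_notMem e.adj
  have hy := hdeg e.y_notMem e.x_notMem e.adj.symm
  have hN : e.N = nbrsIn G C.verts e.x ∪ nbrsIn G C.verts e.y := by
    ext v
    rw [e.mem_N, Finset.mem_union, mem_nbrsIn, mem_nbrsIn, G.adj_comm v, G.adj_comm v]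
    tauto
  have := Finset.card_union_add_card_inter (nbrsIn G C.verts e.x) (nbrsIn G C.verts e.y)
  rw [← hN, ← M] at this
  omega

end LongestCycle.OuterEdge

theorem LongestCycle.OuterEdge.four_mul_le [Fintype V] {C : LongestCycle G} (e : C.OuterEdge)
    {δ : ℕ} (hδ : ∀ v, δ ≤ (nbrsIn G Finset.univ v).card) :
    4 * δ ≤ C.len + connectivity G + 4 := by
  have hcount := e.card_add_card_good
  have hdeg := e.two_mul_le hδ
  have hMN := Finset.card_le_card e.M_subset_N
  by_cases hM : e.M.card ≤ connectivity G
  · omega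
  have hlen : C.len < Fintype.card V := by
    rw [← C.card_verts]
    exact Finset.card_lt_univ_of_notMem e.x_notMem
  obtain ⟨P, Q, S, hs, hS⟩ := exists_isSeparation_card_le_connectivity (G := G) (by omega)
  by_cases hcover : ∀ a b, a ∉ C.verts → b ∉ C.verts → G.Adj a b → a ∈ S ∨ b ∈ S
  · obtain ⟨p, q, hpq⟩ := e.exists_card_nbrsIn_add_le hs (by omega) hcover
    have hp := hδ p
    have hq := hδ q
    omega
  push Not at hcover
  obtain ⟨a, b, ha, hb, hab, haS, hbS⟩ := hcover
  let e' : C.OuterEdge := ⟨a, b, ha, hb, hab, e.eq_of_adj_adj⟩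
  obtain ⟨p, hp⟩ : ∃ p, (nbrsIn G Finset.univ p).card ≤ e'.good.card + S.card + 1 := by
    rcases hs.mem_or_mem_or_mem a with haP | haQ | haS'
    · exact e'.exists_card_nbrsIn_univ_le_of_mem_right hs.symm haP
        ((hs.mem_or_mem_of_adj haP hab).resolve_right hbS)
    · exact e'.exists_card_nbrsIn_univ_le_of_mem_right hs haQ
        ((hs.symm.mem_or_mem_of_adj haQ hab).resolve_right hbS)
    · exact absurd haS' haS
  have hcount' := e'.card_add_card_good
  have hdeg' := e'.two_mul_le hδ
  have hMN' := Finset.card_le_card e'.M_subset_N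
  have hp' := hδ p
  omega

theorem LongestCycle.four_mul_le_of_outer_edge [Fintype V] (C : LongestCycle G)
    (hG : KConnected G 4) {δ : ℕ} (hδ : ∀ v, δ ≤ (nbrsIn G Finset.univ v).card) {x y : V}
    (hx : x ∉ C.verts) (hy : y ∉ C.verts) (hxy : G.Adj x y) :
    4 * δ ≤ C.len + connectivity G + 4 := by
  by_cases hpath : ∀ a b d, a ∉ C.verts → b ∉ C.verts → d ∉ C.verts → G.Adj a b → G.Adj b d → a = d
  · exact OuterEdge.four_mul_le ⟨x, y, hx, hy, hxy, hpath⟩ hδ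
  · push Not at hpath
    obtain ⟨a, b, d, ha, hb, hd, hab, hbd, had⟩ := hpath
    have := C.four_mul_le_of_outer_path hG hδ ha hb hd hab hbd had
    have := hG.le_connectivity
    omega

theorem minDegree_le_card_nbrsIn_univ [Fintype V] [DecidableRel G.Adj] (v : V) :
    G.minDegree ≤ (nbrsIn G Finset.univ v).card := by
  have := G.minDegree_le_degree v
  rw [← G.card_neighborFinset_eq_degree, G.neighborFinset_eq_filter] at this
  exact this.trans_eq (congrArg Finset.card (by ext; simp))

end

theorem nikoghosyan_2011_longest_dominating (G : SimpleGraph V) [Fintype V] [DecidableRel G.Adj]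
    (h4 : KConnected G 4) :
    (circumference G : ℤ) ≥ 4 * G.minDegree - connectivity G - 4 ∨
      ∀ (v : V) (w : G.Walk v v), IsLongestCycle w → IsDominatingCycle w := by
  refine or_iff_not_imp_right.2 fun hnot => ?_
  push Not at hnot
  obtain ⟨v, w, hw, hdom⟩ := hnot
  obtain ⟨C, hlen, hverts⟩ := hw.exists_longestCycle
  obtain ⟨x, y, hxy, hx, hy⟩ : ∃ x y, G.Adj x y ∧ x ∉ C.verts ∧ y ∉ C.verts := by
    by_contra! hcover
    refine hdom ⟨hw.1, fun x y hxy => ?_⟩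
    rw [← hverts, ← hverts]
    exact or_iff_not_imp_left.2 fun hx => hcover x y hxy hx
  have hbound := C.four_mul_le_of_outer_edge h4 minDegree_le_card_nbrsIn_univ hx hy hxy
  rw [hlen, ← hw.circumference_eq] at hbound
  omega
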